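/- arXiv:1010.2296 — 4 statements merged into one kernel-verified Lean document; each statement's English description precedes it below -/
import Mathlib

section
/- Let G be a finite connected simple circular arc graph with minimum degree δ(G) ≥ 2. Then diam(G) ≤ rc(G) ≤ diam(G) + 4. -/
open SimpleGraph Set

/-- The predicate that an edge colouring `c` makes `G` rainbow connected: every pair of
vertices is joined by a path no two of whose edges receive the same colour. -/
def RainbowConnectedUnder {V : Type*} (G : SimpleGraph V) (c : Sym2 V → ℕ) : Prop :=
  ∀ u v : V, ∃ p : G.Walk u v, p.IsPath ∧ (p.edges.map c).Nodup

/-- The rainbow connection number of `G`: the least `n` such that some edge colouring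
using colours `< n` makes `G` rainbow connected. -/
noncomputable def rc {V : Type*} (G : SimpleGraph V) : ℕ :=
  sInf {n | ∃ c : Sym2 V → ℕ, (∀ e ∈ G.edgeSet, c e < n) ∧ RainbowConnectedUnder G c}

/-- Degree of a vertex (as the cardinality of its neighbour set). -/
noncomputable def deg {V : Type*} (G : SimpleGraph V) (v : V) : ℕ := (G.neighborSet v).ncard

/-- `D` is a dominating set of `G`. -/
def IsDominatingSet {V : Type*} (G : SimpleGraph V) (D : Set V) : Prop :=
  ∀ v : V, v ∈ D ∨ ∃ u ∈ D, G.Adj u v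

/-- The connected domination number of `G`. -/
noncomputable def connDomNum {V : Type*} (G : SimpleGraph V) : ℕ :=
  sInf {n | ∃ D : Set V, D.ncard = n ∧ IsDominatingSet G D ∧ (G.induce D).Connected}

/-- Distance of a vertex `v` to a set of vertices `D`. -/
noncomputable def distSet {V : Type*} (G : SimpleGraph V) (D : Set V) (v : V) : ℕ :=
  sInf ((fun u => G.dist u v) '' D)

/-- Diameter of `G`. -/
noncomputable def graphDiam {V : Type*} (G : SimpleGraph V) : ℕ :=
  sSup (Set.range fun p : V × V => G.dist p.1 p.2)

/-- Eccentricity of a vertex. -/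
noncomputable def ecc {V : Type*} (G : SimpleGraph V) (v : V) : ℕ :=
  sSup (Set.range fun u => G.dist v u)

/-- Radius of `G`. -/
noncomputable def graphRadius {V : Type*} (G : SimpleGraph V) : ℕ :=
  sInf (Set.range fun v => ecc G v)

/-- `G` is an interval graph: vertices can be assigned nonempty closed real intervals such
that two distinct vertices are adjacent iff their intervals intersect. -/
def IsIntervalGraph {V : Type*} (G : SimpleGraph V) : Prop :=
  ∃ a b : V → ℝ, (∀ v, a v ≤ b v) ∧
    ∀ u v : V, u ≠ v → (G.Adj u v ↔ (Set.Icc (a u) (b u) ∩ Set.Icc (a v) (b v)).Nonempty)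

/-- `G` is a unit interval graph. -/
def IsUnitIntervalGraph {V : Type*} (G : SimpleGraph V) : Prop :=
  ∃ a : V → ℝ,
    ∀ u v : V, u ≠ v →
      (G.Adj u v ↔ (Set.Icc (a u) (a u + 1) ∩ Set.Icc (a v) (a v + 1)).Nonempty)

/-- `G` is a circular arc graph: vertices can be assigned nonempty closed arcs of a circle
(images of closed intervals in `AddCircle 1`) such that two distinct vertices are adjacent
iff their arcs intersect. -/
def IsCircularArcGraph {V : Type*} (G : SimpleGraph V) : Prop :=
  ∃ a b : V → ℝ, (∀ v, a v ≤ b v) ∧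
    ∀ u v : V, u ≠ v → (G.Adj u v ↔
      (((fun x : ℝ => (x : AddCircle (1:ℝ))) '' Set.Icc (a u) (b u)) ∩
        ((fun x : ℝ => (x : AddCircle (1:ℝ))) '' Set.Icc (a v) (b v))).Nonempty)

/-- There is a path from `x` to `y` avoiding the closed neighbourhood of `z`. -/
def HasAvoidingPath {V : Type*} (G : SimpleGraph V) (x y z : V) : Prop :=
  ∃ p : G.Walk x y, p.IsPath ∧ ∀ w ∈ p.support, w ≠ z ∧ ¬ G.Adj z w

/-- `G` is AT-free: it has no asteroidal triple. -/
def IsATFree {V : Type*} (G : SimpleGraph V) : Prop :=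
  ¬ ∃ x y z : V, x ≠ y ∧ y ≠ z ∧ x ≠ z ∧ ¬G.Adj x y ∧ ¬G.Adj y z ∧ ¬G.Adj x z ∧
    HasAvoidingPath G x y z ∧ HasAvoidingPath G y z x ∧ HasAvoidingPath G x z y

/-- `G` is a threshold graph. -/
def IsThresholdGraph {V : Type*} (G : SimpleGraph V) : Prop :=
  ∃ (w : V → ℝ) (t : ℝ), ∀ u v : V, u ≠ v → (G.Adj u v ↔ t ≤ w u + w v)

/-- `G` is a chain graph: bipartite with the neighbourhoods of one side linearly ordered
by inclusion. -/
def IsChainGraph {V : Type*} (G : SimpleGraph V) : Prop :=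
  ∃ A B : Set V, A ∪ B = Set.univ ∧ Disjoint A B ∧
    (∀ u v : V, G.Adj u v → ¬(u ∈ A ∧ v ∈ A) ∧ ¬(u ∈ B ∧ v ∈ B)) ∧
    ∀ a₁ ∈ A, ∀ a₂ ∈ A,
      G.neighborSet a₁ ⊆ G.neighborSet a₂ ∨ G.neighborSet a₂ ⊆ G.neighborSet a₁

/-- `G` is chordal: it has no induced cycle of length greater than 3. -/
def IsChordal {V : Type*} (G : SimpleGraph V) : Prop :=
  ∀ n : ℕ, 4 ≤ n → IsEmpty (SimpleGraph.cycleGraph n ↪g G)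

/-!
A rainbow colouring with `n` colours of a dominating subgraph `D` extends to `G` with three more
colours. Take a maximal independent set `I` of the vertices outside `D`, one edge into `D` for each
vertex of `I` (first new colour), the other edges into `D` (second) and the edges outside `D`
(third). Minimum degree 2 gives every outside vertex two ways into `D` with disjoint colour sets,
so that any two vertices can choose colour-disjoint ones.

For a circular arc graph, lift the arcs to the universal cover of the circle. If no walk in the
lift joins two copies of a vertex, then `G` is an interval graph, and `D` can be a shortest path
between the interval that ends first and the one that starts last. Otherwise let `D` be the image
of a shortest walk between two copies of a vertex. It goes around the circle, hence dominates, and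
it is isometric up to half its length, so its length is at most `2 * diam G + 1`; colouring it
cyclically makes it rainbow connected with `diam G + 1` colours.
-/

section RainbowReachable

variable {V W : Type*} {G : SimpleGraph V} {H : SimpleGraph W} {c : Sym2 V → ℕ} {S T : Set ℕ}
  {u v w : V} {n : ℕ}

/-- `u` and `v` are joined by a walk whose edges have pairwise distinct colours, all in `S`.
Walks are used instead of paths because they can be concatenated; shortcutting a rainbow walk
gives a rainbow path. -/
def RainbowReachable (G : SimpleGraph V) (c : Sym2 V → ℕ) (S : Set ℕ) (u v : V) : Prop :=
  ∃ p : G.Walk u v, (p.edges.map c).Nodup ∧ ∀ e ∈ p.edges, c e ∈ S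

/-- `G` can be made rainbow connected with the colours `0, …, n - 1`, i.e. `rc(G) ≤ n` with the
infimum attained by an actual colouring. -/
def RainbowColorable (G : SimpleGraph V) (n : ℕ) : Prop :=
  ∃ c : Sym2 V → ℕ, (∀ e ∈ G.edgeSet, c e < n) ∧ RainbowConnectedUnder G c

namespace RainbowReachable

theorem refl (G : SimpleGraph V) (c : Sym2 V → ℕ) (S : Set ℕ) (u : V) :
    RainbowReachable G c S u u :=
  ⟨.nil, by simp, by simp⟩

theorem of_adj (h : G.Adj u v) : RainbowReachable G c {c s(u, v)} u v :=
  ⟨h.toWalk, by simp, by simp⟩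

theorem symm (h : RainbowReachable G c S u v) : RainbowReachable G c S v u := by
  obtain ⟨p, hp, hpS⟩ := h
  exact ⟨p.reverse, by simpa [List.map_reverse] using hp, by simpa using hpS⟩

theorem mono (hST : S ⊆ T) (h : RainbowReachable G c S u v) : RainbowReachable G c T u v := by
  obtain ⟨p, hp, hpS⟩ := h
  exact ⟨p, hp, fun e he ↦ hST (hpS e he)⟩

theorem trans (hST : Disjoint S T) (huv : RainbowReachable G c S u v)
    (hvw : RainbowReachable G c T v w) : RainbowReachable G c (S ∪ T) u w := by
  obtain ⟨p, hp, hpS⟩ := huv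
  obtain ⟨q, hq, hqT⟩ := hvw
  refine ⟨p.append q, ?_, ?_⟩
  · rw [Walk.edges_append, List.map_append]
    refine hp.append hq fun i hip hiq ↦ ?_
    obtain ⟨e, he, rfl⟩ := List.mem_map.1 hip
    obtain ⟨e', he', hee'⟩ := List.mem_map.1 hiq
    exact Set.disjoint_left.1 hST (hpS e he) (hee' ▸ hqT e' he')
  · intro e he
    rcases List.mem_append.1 (Walk.edges_append p q ▸ he) with he | he
    exacts [.inl (hpS e he), .inr (hqT e he)]

theorem map {c₀ : Sym2 W → ℕ} {x y : W} (f : H →g G)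
    (hc : ∀ e ∈ H.edgeSet, c (e.map f) = c₀ e) (h : RainbowReachable H c₀ S x y) :
    RainbowReachable G c S (f x) (f y) := by
  obtain ⟨p, hp, hpS⟩ := h
  have hcp : ∀ e ∈ p.edges, c (e.map f) = c₀ e := fun e he ↦ hc e (p.edges_subset_edgeSet he)
  refine ⟨p.map f, ?_, ?_⟩
  · rwa [Walk.edges_map, List.map_map, List.map_congr_left (f := c ∘ Sym2.map f) hcp]
  · simpa only [Walk.edges_map, List.forall_mem_map] using
      fun e he ↦ (hcp e he).symm ▸ hpS e he

theorem of_injOn {s : Set (Sym2 V)} (hc : s.InjOn c) (p : G.Walk u v)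
    (hp : ∀ e ∈ p.edges, e ∈ s) : RainbowReachable G c univ u v := by
  classical
  have hsub : ∀ e ∈ p.bypass.edges, e ∈ s := fun e he ↦ hp e (p.edges_bypass_subset_edges he)
  exact ⟨p.bypass, p.bypass_isPath.isTrail.edges_nodup.map_on
    fun e he e' he' ↦ hc (hsub e he) (hsub e' he'), fun _ _ ↦ mem_univ _⟩

end RainbowReachable

theorem rainbowConnectedUnder_iff :
    RainbowConnectedUnder G c ↔ ∀ u v, RainbowReachable G c univ u v := by
  classical
  refine forall₂_congr fun u v ↦ ⟨fun ⟨p, _, hp⟩ ↦ ⟨p, hp, by simp⟩, fun ⟨p, hp, _⟩ ↦ ?_⟩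
  exact ⟨p.bypass, p.bypass_isPath, hp.sublist (p.edges_bypass_sublist_edges.map c)⟩

theorem RainbowColorable.mono {m : ℕ} (hmn : m ≤ n) (h : RainbowColorable G m) :
    RainbowColorable G n := by
  obtain ⟨c, hc, hrc⟩ := h
  exact ⟨c, fun e he ↦ (hc e he).trans_le hmn, hrc⟩

theorem RainbowColorable.dist_le (h : RainbowColorable G n) (u v : V) : G.dist u v ≤ n := by
  obtain ⟨c, hc, hrc⟩ := h
  obtain ⟨p, -, hp⟩ := hrc u v
  have hsub : p.edges.map c ⊆ List.range n := by
    intro i hi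
    obtain ⟨e, he, rfl⟩ := List.mem_map.1 hi
    exact List.mem_range.2 (hc e (p.edges_subset_edgeSet he))
  calc G.dist u v ≤ p.length := SimpleGraph.dist_le p
    _ = (p.edges.map c).length := by simp
    _ ≤ (List.range n).length := (hp.subperm hsub).length_le
    _ = n := List.length_range

theorem RainbowColorable.rc_le (h : RainbowColorable G n) : rc G ≤ n :=
  Nat.sInf_le h

theorem RainbowColorable.graphDiam_le_rc [Nonempty V] (h : RainbowColorable G n) :
    graphDiam G ≤ rc G := by
  have hrc : RainbowColorable G (rc G) := Nat.sInf_mem (s := {n | RainbowColorable G n}) ⟨n, h⟩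
  refine csSup_le (range_nonempty _) ?_
  rintro _ ⟨⟨u, v⟩, rfl⟩
  exact hrc.dist_le u v

theorem dist_le_graphDiam [Finite V] (G : SimpleGraph V) (u v : V) : G.dist u v ≤ graphDiam G :=
  le_csSup (finite_range _).bddAbove ⟨(u, v), rfl⟩

end RainbowReachable

section DominatingCopy

variable {V W : Type*} {G : SimpleGraph V} {H : SimpleGraph W} {c : Sym2 V → ℕ} {D I : Set V}
  {foot : V → V} {n : ℕ}

theorem exists_isIndepSet_subset_dominating (G : SimpleGraph V) (s : Set V) :
    ∃ I ⊆ s, G.IsIndepSet I ∧ ∀ v ∈ s, v ∉ I → ∃ x ∈ I, G.Adj v x := by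
  obtain ⟨I, hI⟩ := zorn_subset {I | I ⊆ s ∧ G.IsIndepSet I} fun C hC hchain ↦
    ⟨⋃₀ C, ⟨sUnion_subset fun t ht ↦ (hC ht).1,
      (pairwise_sUnion hchain.directedOn).2 fun t ht ↦ (hC ht).2⟩, fun t ↦ subset_sUnion_of_mem⟩
  refine ⟨I, hI.prop.1, hI.prop.2, fun v hv hvI ↦ ?_⟩
  by_contra! hnonadj
  have hinsert : G.IsIndepSet (insert v I) :=
    hI.prop.2.insert fun x hx _ ↦ ⟨hnonadj x hx, fun h ↦ hnonadj x hx h.symm⟩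
  exact hvI (hI.le_of_ge ⟨insert_subset hv hI.prop.1, hinsert⟩ (subset_insert v I)
    (mem_insert v I))

/-- A colouring of the edges not inside `D`, for an independent set `I` outside `D` and a
neighbour `foot v ∈ D` of each `v ∉ D`: the edges from `v ∈ I` to `foot v` have colour `n`, the
other edges between `D` and its complement have colour `n + 1`, and the edges outside `D` have
colour `n + 2`. -/
structure IsSpokeColoring (c : Sym2 V → ℕ) (D I : Set V) (foot : V → V) (n : ℕ) : Prop where
  foot_eq : ∀ v ∈ I, c s(v, foot v) = n
  spoke_eq : ∀ v ∉ D, ∀ d ∈ D, ¬(v ∈ I ∧ d = foot v) → c s(v, d) = n + 1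
  outer_eq : ∀ v ∉ D, ∀ w ∉ D, c s(v, w) = n + 2

open Classical in
/-- The edge colouring that is `c₀` on the image of `H` under `f` and, on the remaining edges,
a spoke colouring of the complement of the vertices of that image. -/
noncomputable def extendColoring (f : Copy H G) (c₀ : Sym2 W → ℕ) (I : Set V) (foot : V → V)
    (n : ℕ) (e : Sym2 V) : ℕ :=
  if e ∈ Sym2.map f '' H.edgeSet then Function.extend (Sym2.map f) c₀ 0 e
  else if e ∈ (fun v ↦ s(v, foot v)) '' I then n
  else if ∃ x ∈ e, x ∈ range f then n + 1
  else n + 2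

variable {f : Copy H G} {c₀ : Sym2 W → ℕ}

theorem extendColoring_map {e : Sym2 W} (he : e ∈ H.edgeSet) :
    extendColoring f c₀ I foot n (e.map f) = c₀ e := by
  have hinj : Function.Injective (Sym2.map f) := Sym2.map.injective f.injective
  rw [extendColoring, if_pos (mem_image_of_mem _ he), hinj.extend_apply]

theorem extendColoring_lt (hc₀ : ∀ e ∈ H.edgeSet, c₀ e < n) (e : Sym2 V) :
    extendColoring f c₀ I foot n e < n + 3 := by
  by_cases he : e ∈ Sym2.map f '' H.edgeSet
  · obtain ⟨e, he, rfl⟩ := he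
    rw [extendColoring_map he]
    exact (hc₀ e he).trans (by lia)
  · rw [extendColoring, if_neg he]
    split_ifs <;> lia

theorem isSpokeColoring_extendColoring (hI : I ⊆ (range f)ᶜ) (hfoot : ∀ v ∈ I, foot v ∈ range f) :
    IsSpokeColoring (extendColoring f c₀ I foot n) (range f) I foot n := by
  have not_inner : ∀ v ∉ range f, ∀ w, s(v, w) ∉ Sym2.map f '' H.edgeSet := by
    rintro v hv w ⟨e, -, he⟩
    obtain ⟨x, -, hx⟩ := Sym2.mem_map.1 (he ▸ Sym2.mem_mk_left v w)
    exact hv ⟨x, hx⟩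
  refine ⟨fun v hv ↦ ?_, fun v hv d hd hvd ↦ ?_, fun v hv w hw ↦ ?_⟩
  · rw [extendColoring, if_neg (not_inner v (hI hv) _), if_pos ⟨v, hv, rfl⟩]
  · have not_foot : s(v, d) ∉ (fun x ↦ s(x, foot x)) '' I := by
      rintro ⟨x, hx, hxvd⟩
      rcases Sym2.eq_iff.1 hxvd with ⟨rfl, rfl⟩ | ⟨rfl, -⟩
      exacts [hvd ⟨hx, rfl⟩, hI hx hd]
    rw [extendColoring, if_neg (not_inner v hv d), if_neg not_foot,
      if_pos ⟨d, Sym2.mem_mk_right v d, hd⟩]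
  · have not_foot : s(v, w) ∉ (fun x ↦ s(x, foot x)) '' I := by
      rintro ⟨x, hx, hxvw⟩
      rcases Sym2.eq_iff.1 hxvw with ⟨-, rfl⟩ | ⟨-, rfl⟩
      exacts [hw (hfoot x hx), hv (hfoot x hx)]
    have not_touching : ¬∃ x ∈ s(v, w), x ∈ range f := by simp_all [Sym2.mem_iff]
    rw [extendColoring, if_neg (not_inner v hv w), if_neg not_foot, if_neg not_touching]

/-- Some rainbow walk with colours in `S` leads from `u` into `D`. -/
def HasRainbowExit (G : SimpleGraph V) (c : Sym2 V → ℕ) (D : Set V) (S : Set ℕ) (u : V) : Prop :=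
  ∃ d ∈ D, RainbowReachable G c S u d

theorem IsSpokeColoring.hasRainbowExit_of_mem (hc : IsSpokeColoring c D I foot n)
    (hfoot : ∀ v ∉ D, foot v ∈ D ∧ G.Adj v (foot v)) (hI : I ⊆ Dᶜ) (hindep : G.IsIndepSet I)
    {u : V} (hu : u ∈ I) (hδ : (G.neighborSet u).Nontrivial) :
    HasRainbowExit G c D {n} u ∧ HasRainbowExit G c D {n + 1, n + 2} u := by
  obtain ⟨hfootD, hfoot_adj⟩ := hfoot u (hI hu)
  obtain ⟨q, huq : G.Adj u q, hq⟩ := hδ.exists_ne (foot u)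
  refine ⟨⟨foot u, hfootD, hc.foot_eq u hu ▸ .of_adj hfoot_adj⟩, ?_⟩
  by_cases hqD : q ∈ D
  · refine ⟨q, hqD, (RainbowReachable.of_adj huq).mono ?_⟩
    simp [hc.spoke_eq u (hI hu) q hqD fun h ↦ hq h.2]
  · have hqI : q ∉ I := fun hqI ↦ hindep hu hqI huq.ne huq
    obtain ⟨hqfootD, hqfoot_adj⟩ := hfoot q hqD
    have hfirst := hc.outer_eq u (hI hu) q hqD ▸ RainbowReachable.of_adj (c := c) huq
    have hsecond := hc.spoke_eq q hqD _ hqfootD (fun h ↦ hqI h.1) ▸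
      RainbowReachable.of_adj (c := c) hqfoot_adj
    exact ⟨foot q, hqfootD, (hfirst.trans (by simp) hsecond).mono (by simp)⟩

theorem IsSpokeColoring.hasRainbowExit_of_notMem (hc : IsSpokeColoring c D I foot n)
    (hfoot : ∀ v ∉ D, foot v ∈ D ∧ G.Adj v (foot v)) (hI : I ⊆ Dᶜ)
    {u x : V} (huD : u ∉ D) (huI : u ∉ I) (hx : x ∈ I) (hux : G.Adj u x) :
    HasRainbowExit G c D {n + 1} u ∧ HasRainbowExit G c D {n, n + 2} u := by
  obtain ⟨hfootD, hfoot_adj⟩ := hfoot u huD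
  obtain ⟨hxfootD, hxfoot_adj⟩ := hfoot x (hI hx)
  refine ⟨⟨foot u, hfootD, hc.spoke_eq u huD _ hfootD (fun h ↦ huI h.1) ▸ .of_adj hfoot_adj⟩, ?_⟩
  have hfirst := hc.outer_eq u huD x (hI hx) ▸ RainbowReachable.of_adj (c := c) hux
  have hsecond := hc.foot_eq x hx ▸ RainbowReachable.of_adj (c := c) hxfoot_adj
  exact ⟨foot x, hxfootD, (hfirst.trans (by simp) hsecond).mono (by simp)⟩

theorem HasRainbowExit.rainbowReachable {R S T : Set ℕ} {u v : V}
    (hD : ∀ d ∈ D, ∀ d' ∈ D, RainbowReachable G c R d d') (hRS : Disjoint R S)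
    (hRT : Disjoint R T) (hST : Disjoint S T) (hu : HasRainbowExit G c D S u)
    (hv : HasRainbowExit G c D T v) : RainbowReachable G c univ u v := by
  obtain ⟨d, hd, hud⟩ := hu
  obtain ⟨d', hd', hvd'⟩ := hv
  have hud' := hud.trans hRS.symm (hD d hd d' hd')
  exact (hud'.trans (disjoint_union_left.2 ⟨hST, hRT⟩) hvd'.symm).mono (subset_univ _)

theorem RainbowColorable.of_dominating_copy (hH : RainbowColorable H n) (f : Copy H G)
    (hdom : IsDominatingSet G (range f)) (hδ : ∀ v, (G.neighborSet v).Nontrivial) :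
    RainbowColorable G (n + 3) := by
  obtain ⟨c₀, hc₀, hrc₀⟩ := hH
  have hfoot : ∀ v, ∃ d, v ∉ range f → d ∈ range f ∧ G.Adj v d := fun v ↦ by
    rcases hdom v with hv | ⟨d, hd, hdv⟩
    exacts [⟨v, fun h ↦ absurd hv h⟩, ⟨d, fun _ ↦ ⟨hd, hdv.symm⟩⟩]
  choose foot hfoot using hfoot
  obtain ⟨I, hI, hindep, hImax⟩ := exists_isIndepSet_subset_dominating G (range f)ᶜ
  let c := extendColoring f c₀ I foot n
  have hspoke : IsSpokeColoring c (range f) I foot n :=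
    isSpokeColoring_extendColoring hI fun v hv ↦ (hfoot v (hI hv)).1
  have hinner : ∀ d ∈ range f, ∀ d' ∈ range f, RainbowReachable G c (Iio n) d d' := by
    rintro _ ⟨x, rfl⟩ _ ⟨y, rfl⟩
    obtain ⟨p, -, hp⟩ := hrc₀ x y
    exact RainbowReachable.map f.toHom (fun e ↦ extendColoring_map)
      ⟨p, hp, fun e he ↦ hc₀ e (p.edges_subset_edgeSet he)⟩
  have hexit : ∀ u,
      (HasRainbowExit G c (range f) {n} u ∧ HasRainbowExit G c (range f) {n + 1, n + 2} u) ∨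
      (HasRainbowExit G c (range f) {n + 1} u ∧ HasRainbowExit G c (range f) {n, n + 2} u) := by
    intro u
    by_cases huD : u ∈ range f
    · exact .inl ⟨⟨u, huD, .refl ..⟩, ⟨u, huD, .refl ..⟩⟩
    by_cases huI : u ∈ I
    · exact .inl (hspoke.hasRainbowExit_of_mem hfoot hI hindep huI (hδ u))
    · obtain ⟨x, hx, hux⟩ := hImax u huD huI
      exact .inr (hspoke.hasRainbowExit_of_notMem hfoot hI huD huI hx hux)
  refine ⟨c, fun e _ ↦ extendColoring_lt hc₀ e, rainbowConnectedUnder_iff.2 fun u v ↦ ?_⟩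
  rcases hexit u with ⟨hu, -⟩ | ⟨hu, -⟩ <;> rcases hexit v with ⟨hv, hv'⟩ | ⟨hv, hv'⟩
  · exact hu.rainbowReachable hinner (by simp) (by simp) (by simp) hv'
  · exact hu.rainbowReachable hinner (by simp) (by simp) (by simp) hv
  · exact hu.rainbowReachable hinner (by simp) (by simp) (by simp) hv
  · exact hu.rainbowReachable hinner (by simp) (by simp) (by simp) hv'

end DominatingCopy

section WalkColoring

variable {α V : Type*} {G : SimpleGraph V} {u v x y : V} {n : ℕ}

theorem injOn_mod_of_add_notMem {s : Set ℕ} (hs : s ⊆ Iio (2 * n)) (hgap : ∀ i ∈ s, i + n ∉ s) :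
    s.InjOn (· % n) := by
  have not_lt_of_mod_eq : ∀ i ∈ s, ∀ j ∈ s, i % n = j % n → ¬i < j := by
    intro i hi j hj hmod hij
    have hdvd : n ∣ j - i := (Nat.modEq_iff_dvd' hij.le).1 hmod
    have hsub : j - i = n :=
      Nat.eq_of_dvd_of_lt_two_mul (by lia) hdvd ((Nat.sub_le j i).trans_lt (hs hj))
    exact hgap i hi (by rwa [← hsub, Nat.add_sub_cancel' hij.le])
  exact fun i hi j hj h ↦ le_antisymm (not_lt.1 (not_lt_of_mod_eq j hj i hi h.symm))
    (not_lt.1 (not_lt_of_mod_eq i hi j hj h))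

theorem injOn_idxOf_mod [DecidableEq α] {l : List α} {s : Set ℕ} (hs : s ⊆ Iio (2 * n))
    (hgap : ∀ i ∈ s, i + n ∉ s) :
    {e | e ∈ l ∧ l.idxOf e ∈ s}.InjOn fun e ↦ l.idxOf e % n :=
  (injOn_mod_of_add_notMem hs hgap).comp (fun _ he _ _ h ↦ (List.idxOf_inj he.1).1 h)
    fun _ he ↦ he.2

theorem injOn_idxOf_mod_middle [DecidableEq α] {l₁ l₂ l₃ : List α} (h : (l₁ ++ (l₂ ++ l₃)).Nodup)
    (hlen : (l₁ ++ (l₂ ++ l₃)).length ≤ 2 * n) (hn : l₂.length ≤ n) :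
    {e | e ∈ l₂}.InjOn fun e ↦ (l₁ ++ (l₂ ++ l₃)).idxOf e % n := by
  simp only [List.length_append] at hlen
  refine (injOn_idxOf_mod (s := Ico l₁.length (l₁.length + l₂.length)) ?_ ?_).mono
    fun e (he : e ∈ l₂) ↦ ?_
  · exact fun i hi ↦ by simp only [mem_Ico, mem_Iio] at hi ⊢; lia
  · exact fun i hi hi' ↦ by simp only [mem_Ico] at hi hi'; lia
  · have he₁ : e ∉ l₁ := fun he₁ ↦ (List.nodup_append'.1 h).2.2 he₁ (List.mem_append_left _ he)
    have hidx := List.idxOf_lt_length_of_mem he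
    refine ⟨List.mem_append_right _ (List.mem_append_left _ he), ?_⟩
    rw [List.idxOf_append, if_neg he₁, List.idxOf_append, if_pos he, mem_Ico]
    lia

theorem injOn_idxOf_mod_outer [DecidableEq α] {l₁ l₂ l₃ : List α} (h : (l₁ ++ (l₂ ++ l₃)).Nodup)
    (hlen : (l₁ ++ (l₂ ++ l₃)).length ≤ 2 * n) (hn : n ≤ l₂.length) :
    {e | e ∈ l₃ ++ l₁}.InjOn fun e ↦ (l₁ ++ (l₂ ++ l₃)).idxOf e % n := by
  obtain ⟨-, h₂₃, h₁⟩ := List.nodup_append'.1 h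
  simp only [List.length_append] at hlen
  refine (injOn_idxOf_mod (s := Iio l₁.length ∪
    Ico (l₁.length + l₂.length) (l₁.length + (l₂.length + l₃.length))) ?_ ?_).mono fun e he ↦ ?_
  · exact fun i hi ↦ by simp only [mem_union, mem_Ico, mem_Iio] at hi ⊢; lia
  · exact fun i hi hi' ↦ by simp only [mem_union, mem_Ico, mem_Iio] at hi hi'; lia
  · rcases List.mem_append.1 he with he | he
    · have he₁ : e ∉ l₁ := fun he₁ ↦ h₁ he₁ (List.mem_append_right _ he)
      have he₂ : e ∉ l₂ := fun he₂ ↦ (List.nodup_append'.1 h₂₃).2.2 he₂ he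
      have hidx := List.idxOf_lt_length_of_mem he
      refine ⟨List.mem_append_right _ (List.mem_append_right _ he), .inr ?_⟩
      rw [List.idxOf_append, if_neg he₁, List.idxOf_append, if_neg he₂, mem_Ico]
      lia
    · refine ⟨List.mem_append_left _ he, .inl ?_⟩
      rw [List.idxOf_append, if_pos he]
      exact List.idxOf_lt_length_of_mem he

open Classical in
-- Of the two arcs between `x` and `y`, the one with at most `n` edges is rainbow: edges of equal
-- colour are exactly `n` positions apart.
theorem rainbowReachable_of_isTrail_append {q : G.Walk u x} {r : G.Walk x y} {s : G.Walk y u}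
    (hp : (q.append (r.append s)).IsTrail) (hn : (q.append (r.append s)).length ≤ 2 * n) :
    RainbowReachable G (fun e ↦ (q.append (r.append s)).edges.idxOf e % n) univ x y := by
  have hnodup := hp.edges_nodup
  rw [← Walk.length_edges] at hn
  simp only [Walk.edges_append] at hnodup hn ⊢
  rcases le_total r.edges.length n with hr | hr
  · exact .of_injOn (injOn_idxOf_mod_middle hnodup hn hr) r fun _ ↦ id
  · refine (RainbowReachable.of_injOn (injOn_idxOf_mod_outer hnodup hn hr) (s.append q) ?_).symm
    simp only [Walk.edges_append]
    exact fun _ ↦ id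

theorem length_pos_of_spanning_walk {p : G.Walk u v} (hspan : ∀ x, x ∈ p.support) {e : Sym2 V}
    (he : e ∈ G.edgeSet) : 0 < p.length := by
  cases p with
  | cons => simp
  | nil =>
    induction e with
    | h x y =>
      simp only [Walk.support_nil, List.mem_singleton] at hspan
      exact absurd ((hspan x).trans (hspan y).symm) (G.ne_of_adj he)

theorem rainbowColorable_of_spanning_walk (p : G.Walk u v) (hspan : ∀ x, x ∈ p.support) :
    RainbowColorable G p.length := by
  classical
  refine ⟨fun e ↦ p.edges.idxOf e % p.length,
    fun e he ↦ Nat.mod_lt _ (length_pos_of_spanning_walk hspan he),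
    rainbowConnectedUnder_iff.2 fun x y ↦ ?_⟩
  refine .of_injOn (injOn_idxOf_mod (s := Iio p.length) ?_ ?_)
    ((p.takeUntil x (hspan x)).reverse.append (p.takeUntil y (hspan y))) fun e he ↦ ?_
  · exact Iio_subset_Iio (by lia)
  · exact fun i _ hi ↦ by simp only [mem_Iio] at hi; lia
  · have hep : e ∈ p.edges := by
      simp only [Walk.edges_append, Walk.edges_reverse, List.mem_append, List.mem_reverse] at he
      exact he.elim (p.edges_takeUntil_subset_edges _ ·) (p.edges_takeUntil_subset_edges _ ·)
    exact ⟨hep, by simpa using List.idxOf_lt_length_of_mem hep⟩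

theorem rainbowColorable_of_spanning_closed_trail {p : G.Walk u u} (hp : p.IsTrail)
    (hspan : ∀ x, x ∈ p.support) (hn : p.length ≤ 2 * n) : RainbowColorable G n := by
  classical
  have hpos : ∀ e ∈ G.edgeSet, 0 < n := fun e he ↦ by
    have := length_pos_of_spanning_walk hspan he
    lia
  refine ⟨fun e ↦ p.edges.idxOf e % n, fun e he ↦ Nat.mod_lt _ (hpos e he),
    rainbowConnectedUnder_iff.2 fun x y ↦ ?_⟩
  clear hpos
  obtain ⟨q, s, rfl⟩ := Walk.mem_support_iff_exists_append.1 (hspan x)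
  rcases (Walk.mem_support_append_iff q s).1 (hspan y) with hy | hy
  · obtain ⟨q, r, rfl⟩ := Walk.mem_support_iff_exists_append.1 hy
    rw [← Walk.append_assoc] at hp hn ⊢
    exact (rainbowReachable_of_isTrail_append hp hn).symm
  · obtain ⟨r, s, rfl⟩ := Walk.mem_support_iff_exists_append.1 hy
    exact rainbowReachable_of_isTrail_append hp hn

theorem mem_support_mapToSubgraph (p : G.Walk u v) (x : p.toSubgraph.verts) :
    x ∈ p.mapToSubgraph.support := by
  have hx : (x : V) ∈ (p.mapToSubgraph.map p.toSubgraph.hom).support := by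
    rw [p.map_mapToSubgraph_hom]
    exact p.mem_verts_toSubgraph.1 x.2
  rw [Walk.support_map] at hx
  exact (List.mem_map_of_injective Subgraph.hom_injective).1 hx

theorem length_mapToSubgraph (p : G.Walk u v) : p.mapToSubgraph.length = p.length :=
  (Walk.length_map _ _).symm.trans (congrArg Walk.length p.map_mapToSubgraph_hom)

theorem RainbowColorable.of_dominating_walk (p : G.Walk u v)
    (hp : RainbowColorable p.toSubgraph.coe n) (hdom : IsDominatingSet G {x | x ∈ p.support})
    (hδ : ∀ v, (G.neighborSet v).Nontrivial) : RainbowColorable G (n + 3) := by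
  refine hp.of_dominating_copy p.toSubgraph.coeCopy ?_ hδ
  rwa [← p.verts_toSubgraph, ← Subtype.range_coe (s := p.toSubgraph.verts)] at hdom

theorem rainbowColorable_of_dominating_walk (p : G.Walk u v)
    (hdom : IsDominatingSet G {x | x ∈ p.support}) (hδ : ∀ v, (G.neighborSet v).Nontrivial) :
    RainbowColorable G (p.length + 3) := by
  have hcolor := rainbowColorable_of_spanning_walk p.mapToSubgraph (mem_support_mapToSubgraph p)
  exact .of_dominating_walk p (length_mapToSubgraph p ▸ hcolor) hdom hδ

theorem rainbowColorable_of_dominating_closed_trail {p : G.Walk u u} (hp : p.IsTrail)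
    (hdom : IsDominatingSet G {x | x ∈ p.support}) (hδ : ∀ v, (G.neighborSet v).Nontrivial)
    (hn : p.length ≤ 2 * n) : RainbowColorable G (n + 3) := by
  have htrail : p.mapToSubgraph.IsTrail := by
    rwa [← Walk.isTrail_map_iff_of_injective p.toSubgraph.hom_injective, p.map_mapToSubgraph_hom]
  exact .of_dominating_walk p (rainbowColorable_of_spanning_closed_trail htrail
    (mem_support_mapToSubgraph p) (length_mapToSubgraph p ▸ hn)) hdom hδ

end WalkColoring

section IntervalGraph

variable {V α : Type*} {G : SimpleGraph V}

theorem exists_mem_support_crossing [LinearOrder α] {a b : V → α} {s t : α} {x y : V}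
    (hab : ∀ x y, G.Adj x y → a y ≤ b x) (hst : s ≤ t) (p : G.Walk x y) (hx : a x ≤ t)
    (hy : s ≤ b y) : ∃ d ∈ p.support, a d ≤ t ∧ s ≤ b d := by
  induction p with
  | nil => exact ⟨_, by simp, hx, hy⟩
  | @cons x z y hxz p ih =>
    rcases le_or_gt s (b x) with hsx | hxs
    · exact ⟨x, by simp, hx, hsx⟩
    · obtain ⟨d, hd, had⟩ := ih ((hab x z hxz).trans (hxs.le.trans hst)) hy
      exact ⟨d, by simp [hd], had⟩

theorem IsIntervalGraph.exists_dominating_pair [Finite V] [Nonempty V] (hG : IsIntervalGraph G) :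
    ∃ u v, ∀ p : G.Walk u v, IsDominatingSet G {x | x ∈ p.support} := by
  obtain ⟨a, b, hab, hadj⟩ := hG
  have adj_iff : ∀ x y, x ≠ y → (G.Adj x y ↔ a y ≤ b x ∧ a x ≤ b y) := fun x y hxy ↦ by
    rw [hadj x y hxy, Icc_inter_Icc, nonempty_Icc]
    simp [hab]
  obtain ⟨u, hu⟩ := Finite.exists_min b
  obtain ⟨v, hv⟩ := Finite.exists_max a
  refine ⟨u, v, fun p z ↦ ?_⟩
  obtain ⟨d, hd, hdz, hzd⟩ := exists_mem_support_crossing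
    (fun x y hxy ↦ ((adj_iff x y hxy.ne).1 hxy).1) (hab z) p ((hab u).trans (hu z))
    ((hv z).trans (hab v))
  by_cases hdz' : d = z
  · exact .inl (hdz' ▸ hd)
  · exact .inr ⟨d, hd, (adj_iff d z hdz').2 ⟨hzd, hdz⟩⟩

theorem IsIntervalGraph.rainbowColorable [Finite V] (hG : IsIntervalGraph G) (hconn : G.Connected)
    (hδ : ∀ v, (G.neighborSet v).Nontrivial) : RainbowColorable G (graphDiam G + 3) := by
  have := hconn.nonempty
  obtain ⟨u, v, hdom⟩ := hG.exists_dominating_pair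
  obtain ⟨p, hp⟩ := hconn.exists_walk_length_eq_dist u v
  refine (rainbowColorable_of_dominating_walk p (hdom p) hδ).mono ?_
  have := dist_le_graphDiam G u v
  lia

end IntervalGraph

section CircularArcModel

variable {V : Type*} {G : SimpleGraph V} {a b : V → ℝ}

theorem image_coe_inter_image_coe_nonempty_iff {𝕜 : Type*} [AddCommGroup 𝕜] {p : 𝕜} {s t : Set 𝕜} :
    ((fun x : 𝕜 ↦ (x : AddCircle p)) '' s ∩ (fun x : 𝕜 ↦ (x : AddCircle p)) '' t).Nonempty ↔
      ∃ n : ℤ, (s ∩ (· + n • p) '' t).Nonempty := by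
  constructor
  · rintro ⟨_, ⟨x, hx, rfl⟩, ⟨y, hy, hyx : (y : AddCircle p) = x⟩⟩
    obtain ⟨n, hn⟩ := (AddCircle.coe_eq_zero_iff p).1 (sub_eq_zero.2 hyx.symm)
    exact ⟨n, x, hx, y, hy, by simp [hn]⟩
  · rintro ⟨n, _, hx, y, hy, rfl⟩
    exact ⟨_, ⟨_, hx, rfl⟩, y, hy, by simp⟩

/-- The closed arcs `[a v, b v] + ℤ` of the circle `ℝ / ℤ` represent `G`. Two arcs intersect when
some integer translate of one interval meets the other, so that no quotient is involved. -/
structure IsArcModel (G : SimpleGraph V) (a b : V → ℝ) : Prop where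
  le : ∀ v, a v ≤ b v
  adj_iff : ∀ {u v}, u ≠ v → (G.Adj u v ↔ ∃ n : ℤ, a u ≤ b v + n ∧ a v + n ≤ b u)

theorem IsCircularArcGraph.exists_isArcModel (hG : IsCircularArcGraph G) :
    ∃ a b, IsArcModel G a b := by
  obtain ⟨a, b, hab, hadj⟩ := hG
  refine ⟨a, b, hab, fun {u v} huv ↦ ?_⟩
  rw [hadj u v huv, image_coe_inter_image_coe_nonempty_iff]
  refine exists_congr fun n ↦ ?_
  rw [image_add_const_Icc, Icc_inter_Icc, nonempty_Icc]
  simp [hab, and_comm]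

/-- The lift of an arc model to the universal cover of the circle: `(v, n)` stands for the interval
`[a v + n, b v + n]`, and copies of distinct vertices are adjacent when they intersect. -/
def arcCover (a b : V → ℝ) : SimpleGraph (V × ℤ) where
  Adj x y := x.1 ≠ y.1 ∧ a x.1 + x.2 ≤ b y.1 + y.2 ∧ a y.1 + y.2 ≤ b x.1 + x.2
  symm := ⟨fun _ _ h ↦ ⟨h.1.symm, h.2.2, h.2.1⟩⟩
  loopless := ⟨fun _ h ↦ h.1 rfl⟩

namespace IsArcModel

theorem eq_or_adj (h : IsArcModel G a b) {x y : V × ℤ} (hxy : a x.1 + x.2 ≤ b y.1 + y.2)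
    (hyx : a y.1 + y.2 ≤ b x.1 + x.2) : x.1 = y.1 ∨ G.Adj x.1 y.1 := by
  by_cases hne : x.1 = y.1
  · exact .inl hne
  · refine .inr ((h.adj_iff hne).2 ⟨y.2 - x.2, ?_, ?_⟩) <;> push_cast <;> linarith

/-- The covering projection. -/
def coverHom (h : IsArcModel G a b) : arcCover a b →g G where
  toFun := Prod.fst
  map_rel' hxy := (h.eq_or_adj hxy.2.1 hxy.2.2).resolve_left hxy.1

/-- The image in `G` of a walk in the cover. It is `Walk.map` with the endpoints unfolded, so that a
walk between two copies of a vertex becomes a closed walk. -/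
def project (h : IsArcModel G a b) {x y : V × ℤ} (q : (arcCover a b).Walk x y) : G.Walk x.1 y.1 :=
  q.map h.coverHom

theorem length_project (h : IsArcModel G a b) {x y : V × ℤ} (q : (arcCover a b).Walk x y) :
    (h.project q).length = q.length :=
  q.length_map _

theorem support_project (h : IsArcModel G a b) {x y : V × ℤ} (q : (arcCover a b).Walk x y) :
    (h.project q).support = q.support.map Prod.fst :=
  q.support_map _

theorem getVert_project (h : IsArcModel G a b) {x y : V × ℤ} (q : (arcCover a b).Walk x y)
    (n : ℕ) : (h.project q).getVert n = (q.getVert n).1 :=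
  q.getVert_map _ n

theorem exists_adj_lift (h : IsArcModel G a b) {u v : V} (huv : G.Adj u v) (i : ℤ) :
    ∃ j, (arcCover a b).Adj (u, i) (v, j) := by
  obtain ⟨n, hu, hv⟩ := (h.adj_iff huv.ne).1 huv
  exact ⟨i + n, huv.ne, by push_cast; linarith, by push_cast; linarith⟩

theorem exists_walk_lift (h : IsArcModel G a b) {u v : V} (p : G.Walk u v) (i : ℤ) :
    ∃ (j : ℤ) (q : (arcCover a b).Walk (u, i) (v, j)), q.length = p.length := by
  induction p generalizing i with
  | nil => exact ⟨i, .nil, rfl⟩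
  | cons huw p ih =>
    obtain ⟨k, hadj⟩ := h.exists_adj_lift huw i
    obtain ⟨j, q, hq⟩ := ih k
    exact ⟨j, .cons hadj q, by simp [hq]⟩

-- A connected component of the cover then contains exactly one copy of each vertex, and the
-- intervals of these copies represent `G`.
theorem isIntervalGraph (h : IsArcModel G a b) (hG : G.Connected)
    (hwind : ∀ v i j, (arcCover a b).Reachable (v, i) (v, j) → i = j) : IsIntervalGraph G := by
  obtain ⟨v₀⟩ := hG.nonempty
  have hlift : ∀ v, ∃ n : ℤ, (arcCover a b).Reachable (v₀, 0) (v, n) := fun v ↦ by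
    obtain ⟨p⟩ := hG.preconnected v₀ v
    obtain ⟨n, q, -⟩ := h.exists_walk_lift p 0
    exact ⟨n, q.reachable⟩
  choose n hn using hlift
  have hadj : ∀ {u v}, G.Adj u v → (arcCover a b).Adj (u, n u) (v, n v) := fun {u v} huv ↦ by
    obtain ⟨j, hj⟩ := h.exists_adj_lift huv (n u)
    exact hwind v j (n v) (((hn u).trans hj.reachable).symm.trans (hn v)) ▸ hj
  refine ⟨fun v ↦ a v + n v, fun v ↦ b v + n v, fun v ↦ by simpa using h.le v, fun u v huv ↦ ?_⟩
  rw [Icc_inter_Icc, nonempty_Icc]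
  have hmeet : (a u + n u ≤ b v + n v ∧ a v + n v ≤ b u + n u) ↔ G.Adj u v :=
    ⟨fun hle ↦ (h.eq_or_adj (x := (u, n u)) (y := (v, n v)) hle.1 hle.2).resolve_left huv,
      fun huv ↦ (hadj huv).2⟩
  simp [← hmeet, h.le, and_comm]

end IsArcModel

end CircularArcModel

section Winding

variable {V : Type*} {G : SimpleGraph V} {a b : V → ℝ} {v : V} {m M : ℤ}

theorem exists_walk_getVert_getVert_length_eq {x y : V} (p : G.Walk x y) {i j : ℕ} (hij : i ≤ j)
    (hj : j ≤ p.length) : ∃ r : G.Walk (p.getVert i) (p.getVert j), r.length = j - i := by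
  have hend : (p.drop i).getVert (j - i) = p.getVert j := by
    rw [Walk.drop_getVert, Nat.add_sub_cancel' hij]
  refine ⟨((p.drop i).take (j - i)).copy rfl hend, ?_⟩
  rw [Walk.length_copy, Walk.take_length, Walk.drop_length]
  lia

/-- A walk in the cover between two copies of a vertex (so winding around the circle), as short as
possible among all such walks. -/
structure IsShortestWinding (q : (arcCover a b).Walk (v, m) (v, M)) : Prop where
  lt : m < M
  length_le : ∀ {w : V} {i j : ℤ} (r : (arcCover a b).Walk (w, i) (w, j)), i ≠ j →
    q.length ≤ r.length

theorem exists_isShortestWinding {w : V} {i j : ℤ}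
    (h : (arcCover a b).Reachable (w, i) (w, j)) (hij : i ≠ j) :
    ∃ (v : V) (m M : ℤ) (q : (arcCover a b).Walk (v, m) (v, M)), IsShortestWinding q := by
  classical
  obtain ⟨r⟩ := h
  have hex : ∃ n, ∃ (v : V) (m M : ℤ) (q : (arcCover a b).Walk (v, m) (v, M)),
      m < M ∧ q.length = n := by
    rcases hij.lt_or_gt with hlt | hlt
    exacts [⟨_, w, i, j, r, hlt, rfl⟩, ⟨_, w, j, i, r.reverse, hlt, rfl⟩]
  obtain ⟨v, m, M, q, hmM, hq⟩ := Nat.find_spec hex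
  refine ⟨v, m, M, q, hmM, fun {w i j} r hij ↦ hq ▸ ?_⟩
  rcases hij.lt_or_gt with hlt | hlt
  · exact Nat.find_min' hex ⟨w, i, j, r, hlt, rfl⟩
  · exact Nat.find_min' hex ⟨w, j, i, r.reverse, hlt, r.length_reverse⟩

namespace IsShortestWinding

variable {q : (arcCover a b).Walk (v, m) (v, M)}

-- Lift `r` to the cover: if the lift ends on `q`, it can replace the part of `q` between `i` and
-- `j`; otherwise it closes that part up to a winding walk.
theorem sub_le_length_or (hq : IsShortestWinding q) (h : IsArcModel G a b) {i j : ℕ}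
    (hij : i ≤ j) (hj : j ≤ q.length) (r : G.Walk (q.getVert i).1 (q.getVert j).1) :
    j - i ≤ r.length ∨ q.length ≤ r.length + (j - i) := by
  obtain ⟨N, r', hr'⟩ := h.exists_walk_lift r (q.getVert i).2
  by_cases hN : N = (q.getVert j).2
  · subst hN
    have hle := hq.length_le (((q.take i).append r').append (q.drop j)) hq.lt.ne
    rw [Walk.length_append, Walk.length_append, Walk.take_length, Walk.drop_length, hr'] at hle
    lia
  · obtain ⟨s, hs⟩ := exists_walk_getVert_getVert_length_eq q hij hj
    have hle := hq.length_le (s.reverse.append r') (Ne.symm hN)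
    rw [Walk.length_append, Walk.length_reverse, hs, hr'] at hle
    lia

theorem length_div_two_le_graphDiam [Finite V] (hq : IsShortestWinding q) (h : IsArcModel G a b)
    (hG : G.Connected) : q.length / 2 ≤ graphDiam G := by
  obtain ⟨r, hr⟩ :=
    hG.exists_walk_length_eq_dist (q.getVert 0).1 (q.getVert (q.length / 2)).1
  have hdiam := hr.trans_le (dist_le_graphDiam ..)
  have hshort := hq.sub_le_length_or h (Nat.zero_le _) (Nat.div_le_self _ 2) r
  lia

theorem isDominatingSet_project (hq : IsShortestWinding q) (h : IsArcModel G a b) :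
    IsDominatingSet G {x | x ∈ (h.project q).support} := by
  intro z
  let t : ℤ := ⌈a v + m - b z⌉
  have hlt : (m : ℝ) + 1 ≤ M := mod_cast hq.lt
  have hz := h.le z
  have hle : a v + m - b z ≤ t := Int.le_ceil _
  have hlt' : t < a v + m - b z + 1 := Int.ceil_lt_add_one _
  obtain ⟨d, hd, hdz, hzd⟩ := exists_mem_support_crossing (a := fun x ↦ a x.1 + x.2)
    (b := fun x ↦ b x.1 + x.2) (s := a z + t) (t := b z + t)
    (fun x y (hxy : (arcCover a b).Adj x y) ↦ hxy.2.2) (by linarith) q (by linarith)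
    (by linarith [h.le v])
  have hd' : d.1 ∈ (h.project q).support := by
    rw [h.support_project]
    exact List.mem_map_of_mem hd
  rcases h.eq_or_adj (y := (z, t)) hdz hzd with rfl | hdz
  exacts [.inl hd', .inr ⟨d.1, hd', hdz⟩]

theorem getVert_fst_ne (hq : IsShortestWinding q) (h : IsArcModel G a b) {i j : ℕ}
    (hij : i < j) (hj : j ≤ q.length) (hlt : j - i < q.length) :
    (q.getVert i).1 ≠ (q.getVert j).1 := by
  intro heq
  have := hq.sub_le_length_or h hij.le hj (Walk.nil.copy rfl heq)
  rw [Walk.length_copy, Walk.length_nil] at this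
  lia

theorem isCycle_project (hq : IsShortestWinding q) (h : IsArcModel G a b)
    (hlen : 3 ≤ q.length) : (h.project q).IsCycle := by
  rw [Walk.isCycle_iff_isPath_tail_and_le_length, ← Walk.IsPath.getVert_injOn_iff,
    h.length_project]
  refine ⟨fun i (hi : i ≤ _) j (hj : j ≤ _) hij ↦ ?_, hlen⟩
  rw [Walk.length_tail, h.length_project] at hi hj
  rw [Walk.getVert_tail, Walk.getVert_tail, h.getVert_project, h.getVert_project] at hij
  rcases lt_trichotomy i j with hlt | rfl | hlt
  · exact absurd hij (hq.getVert_fst_ne h (by lia) (by lia) (by lia))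
  · rfl
  · exact absurd hij.symm (hq.getVert_fst_ne h (by lia) (by lia) (by lia))

end IsShortestWinding

theorem IsArcModel.rainbowColorable [Finite V] (h : IsArcModel G a b) (hG : G.Connected)
    (hδ : ∀ v, (G.neighborSet v).Nontrivial) : RainbowColorable G (graphDiam G + 4) := by
  by_cases hwind : ∀ v i j, (arcCover a b).Reachable (v, i) (v, j) → i = j
  · exact ((h.isIntervalGraph hG hwind).rainbowColorable hG hδ).mono (by lia)
  push Not at hwind
  obtain ⟨w, i, j, hreach, hij⟩ := hwind
  obtain ⟨v, m, M, q, hq⟩ := exists_isShortestWinding hreach hij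
  have hdom := hq.isDominatingSet_project h
  have hdiam := hq.length_div_two_le_graphDiam h hG
  rcases le_or_gt 3 q.length with hlen | hlen
  · exact rainbowColorable_of_dominating_closed_trail (n := graphDiam G + 1)
      (hq.isCycle_project h hlen).isTrail hdom hδ (by rw [h.length_project]; lia)
  · exact (rainbowColorable_of_dominating_walk _ hdom hδ).mono (by rw [h.length_project]; lia)

end Winding

/-- For a finite connected circular arc graph `G` with minimum degree at
least 2, `diam(G) ≤ rc(G) ≤ diam(G) + 4`. -/
theorem stmt_7 {V : Type*} [Fintype V] (G : SimpleGraph V) (hG : G.Connected)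
    (hca : IsCircularArcGraph G) (hδ : ∀ v : V, 2 ≤ deg G v) :
    graphDiam G ≤ rc G ∧ rc G ≤ graphDiam G + 4 := by
  have := hG.nonempty
  have hδ' : ∀ v, (G.neighborSet v).Nontrivial := fun v ↦ one_lt_ncard_iff_nontrivial.1 (hδ v)
  obtain ⟨a, b, h⟩ := hca.exists_isArcModel
  have hcolor := h.rainbowColorable hG hδ'
  exact ⟨hcolor.graphDiam_le_rc, hcolor.rc_le⟩
end

section
/- There exists a finite connected simple chordal graph G with no bridges such that rc(G) = 3 · rad(G). -/
open SimpleGraph Set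

/-
In the friendship graph (triangles sharing a centre), two vertices of different triangles are joined
by a rainbow path in at most two colours only if it runs through the centre, so with two colours
the spokes to different triangles have different colours: three triangles force a third colour.
Conversely, two colours for the two spokes of each triangle and a third one for the outer edges
suffice, while the centre makes the radius `1`.
-/

section General

variable {V : Type*} {G : SimpleGraph V}

lemma fin_add_one_add_one_ne_self {n : ℕ} (i : Fin (n + 3)) : i + 1 + 1 ≠ i := by
  rw [add_assoc, Ne, add_eq_left]
  simp [Fin.ext_iff, Fin.val_add, Nat.mod_eq_of_lt]

lemma fin_add_one_add_one_add_one_ne_self {n : ℕ} (i : Fin (n + 4)) : i + 1 + 1 + 1 ≠ i := by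
  rw [add_assoc, add_assoc, Ne, add_eq_left]
  simp [Fin.ext_iff, Fin.val_add, Nat.mod_eq_of_lt]

lemma cycleGraph_adj_add_one {n : ℕ} (i : Fin (n + 2)) : (cycleGraph (n + 2)).Adj i (i + 1) :=
  cycleGraph_adj.2 (.inr (add_sub_cancel_left i 1))

lemma cycleGraph_not_adj_add_one_add_one {n : ℕ} (i : Fin (n + 4)) :
    ¬ (cycleGraph (n + 4)).Adj i (i + 1 + 1) := by
  rw [← mem_neighborSet, cycleGraph_neighborSet]
  rintro (hsub | hadd)
  · exact fin_add_one_add_one_add_one_ne_self i (eq_sub_iff_add_eq.1 hsub)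
  · rw [mem_singleton_iff, add_eq_left] at hadd
    exact one_ne_zero hadd

lemma isChordal_of_forall_middle_mem_clique {K : Set V} (hK : G.IsClique K)
    (hmid : ∀ ⦃a b c⦄, G.Adj a b → G.Adj b c → a ≠ c → ¬ G.Adj a c → b ∈ K) :
    IsChordal G := by
  intro n hn
  obtain ⟨m, rfl⟩ := Nat.exists_eq_add_of_le' hn
  refine ⟨fun f => ?_⟩
  have hne (i : Fin (m + 4)) : f i ≠ f (i + 1 + 1) :=
    f.injective.ne (fin_add_one_add_one_ne_self i).symm
  have hnadj (i : Fin (m + 4)) : ¬ G.Adj (f i) (f (i + 1 + 1)) :=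
    f.map_adj_iff.not.2 (cycleGraph_not_adj_add_one_add_one i)
  have hmem (i : Fin (m + 4)) : f (i + 1) ∈ K :=
    hmid (f.map_adj_iff.2 (cycleGraph_adj_add_one i))
      (f.map_adj_iff.2 (cycleGraph_adj_add_one (i + 1))) (hne i) (hnadj i)
  exact hnadj (0 + 1) (hK (hmem 0) (hmem (0 + 1 + 1)) (hne (0 + 1)))

lemma not_isBridge_of_nonempty_commonNeighbors (hG : G.Preconnected)
    (h : ∀ ⦃u v⦄, G.Adj u v → (G.commonNeighbors u v).Nonempty) (e : Sym2 V) :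
    ¬ G.IsBridge e := by
  induction e using Sym2.ind with
  | _ u v =>
    intro hbridge
    have huv : G.Adj u v := hbridge.reachable_iff_adj.1 (hG u v)
    obtain ⟨w, huw : G.Adj u w, hvw : G.Adj v w⟩ := h huv
    let detour : G.Walk u v := .cons huw (.cons hvw.symm .nil)
    have hmem : s(u, v) ∈ detour.edges := isBridge_iff_forall_walk_mem_edges.1 hbridge detour
    simp [detour, huw.ne, hvw.ne] at hmem

lemma dist_le_one_of_isUniversal {z : V} (hz : G.IsUniversal z) (v : V) : G.dist z v ≤ 1 := by
  obtain rfl | hne := eq_or_ne z v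
  · simp
  · exact (dist_eq_one_iff_adj.2 (hz hne)).le

lemma ecc_le_one_of_isUniversal {z : V} (hz : G.IsUniversal z) : ecc G z ≤ 1 :=
  csSup_le' <| forall_mem_range.2 <| dist_le_one_of_isUniversal hz

lemma one_le_ecc_of_isUniversal [Nontrivial V] {z : V} (hz : G.IsUniversal z) (v : V) :
    1 ≤ ecc G v := by
  have hG : G.Connected := .of_isUniversal hz
  obtain ⟨u, huv⟩ := exists_ne v
  have hbdd : BddAbove (Set.range fun u => G.dist v u) := by
    refine ⟨1 + 1, forall_mem_range.2 fun w => ?_⟩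
    calc G.dist v w ≤ G.dist v z + G.dist z w := hG.dist_triangle
      _ = G.dist z v + G.dist z w := by rw [dist_comm]
      _ ≤ 1 + 1 := add_le_add (dist_le_one_of_isUniversal hz v) (dist_le_one_of_isUniversal hz w)
  exact (hG.pos_dist_of_ne huv.symm).trans_le (le_csSup hbdd ⟨u, rfl⟩)

lemma graphRadius_eq_one_of_isUniversal [Nontrivial V] {z : V} (hz : G.IsUniversal z) :
    graphRadius G = 1 := by
  apply le_antisymm
  · exact (Nat.sInf_le (mem_range_self z)).trans (ecc_le_one_of_isUniversal hz)
  · exact le_csInf ⟨_, mem_range_self z⟩ (forall_mem_range.2 (one_le_ecc_of_isUniversal hz))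

lemma length_le_of_nodup_map_edges {c : Sym2 V → ℕ} {n : ℕ} (hc : ∀ e ∈ G.edgeSet, c e < n)
    {u v : V} {p : G.Walk u v} (hp : (p.edges.map c).Nodup) : p.length ≤ n := by
  have hsub : p.edges.map c ⊆ List.range n := by
    intro x hx
    obtain ⟨e, he, rfl⟩ := List.mem_map.1 hx
    exact List.mem_range.2 (hc e (p.edges_subset_edgeSet he))
  simpa using (hp.subperm hsub).length_le

namespace RainbowConnectedUnder

variable {c : Sym2 V → ℕ} {n : ℕ}

lemma rc_le (hr : RainbowConnectedUnder G c) (hc : ∀ e ∈ G.edgeSet, c e < n) : rc G ≤ n :=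
  Nat.sInf_le ⟨c, hc, hr⟩

lemma exists_lt_rc (hr : RainbowConnectedUnder G c) (hc : ∀ e ∈ G.edgeSet, c e < n) :
    ∃ c' : Sym2 V → ℕ, (∀ e ∈ G.edgeSet, c' e < rc G) ∧ RainbowConnectedUnder G c' :=
  Nat.sInf_mem (s := {n | ∃ c : Sym2 V → ℕ, (∀ e ∈ G.edgeSet, c e < n) ∧
    RainbowConnectedUnder G c}) ⟨n, c, hc, hr⟩

lemma ne_of_commonNeighbors_subset_singleton (hr : RainbowConnectedUnder G c)
    (hc : ∀ e ∈ G.edgeSet, c e < 2) {u v z : V} (huv : u ≠ v) (hadj : ¬ G.Adj u v)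
    (hz : G.commonNeighbors u v ⊆ {z}) : c s(u, z) ≠ c s(v, z) := by
  obtain ⟨p, -, hp⟩ := hr u v
  match p, hp, length_le_of_nodup_map_edges hc hp with
  | .nil, _, _ => exact absurd rfl huv
  | .cons h .nil, _, _ => exact absurd h hadj
  | .cons (v := w) huw (.cons hwv .nil), hp, _ =>
    obtain rfl : w = z := hz ⟨huw, hwv.symm⟩
    simpa [Sym2.eq_swap (a := w)] using hp
  | .cons _ (.cons _ (.cons _ _)), _, hlen => simp at hlen

lemma two_lt_of_isIndepSet (hr : RainbowConnectedUnder G c) (hc : ∀ e ∈ G.edgeSet, c e < n)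
    {z : V} {S : Set V} (hS : S ⊆ G.neighborSet z) (hI : G.IsIndepSet S)
    (hz : S.Pairwise fun u v => G.commonNeighbors u v ⊆ {z}) (hcard : 2 < S.encard) : 2 < n := by
  by_contra! hn
  have hc₂ : ∀ e ∈ G.edgeSet, c e < 2 := fun e he => (hc e he).trans_le hn
  have hinj : S.InjOn fun u => c s(u, z) := by
    intro u hu v hv
    contrapose
    exact fun huv => hr.ne_of_commonNeighbors_subset_singleton hc₂ huv (hI hu hv huv) (hz hu hv huv)
  have hmaps : S.MapsTo (fun u => c s(u, z)) (Finset.range 2) := fun u hu =>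
    Finset.mem_coe.2 (Finset.mem_range.2 (hc₂ _ (hS hu).symm))
  have hle := Set.encard_le_encard_of_injOn hmaps hinj
  rw [Set.encard_coe_eq_coe_finsetCard, Finset.card_range] at hle
  exact hcard.not_ge hle

end RainbowConnectedUnder

end General

/-- The friendship (windmill) graph: triangles indexed by `ι`, glued at the common vertex `none`.
The other two vertices of the triangle `i` are `some (i, false)` and `some (i, true)`. -/
def friendshipGraph (ι : Type*) : SimpleGraph (Option (ι × Bool)) :=
  .fromRel fun u v => u = none ∨ u.map Prod.fst = v.map Prod.fst

/-- The colouring that witnesses `rc (friendshipGraph ι) ≤ 3`: the spoke to `some (i, b)` gets the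
colour `b` (as `0` or `1`), and every edge avoiding the centre gets the colour `2`. -/
def friendshipColouring (ι : Type*) : Sym2 (Option (ι × Bool)) → ℕ :=
  Sym2.lift ⟨fun
    | none, some (_, b) | some (_, b), none => b.toNat
    | _, _ => 2, by rintro (_ | ⟨i, b⟩) (_ | ⟨j, b'⟩) <;> rfl⟩

namespace friendshipGraph

variable {ι : Type*}

lemma adj_none_some (x : ι × Bool) : (friendshipGraph ι).Adj none (some x) := by
  simp [friendshipGraph]

lemma adj_some_some {i j : ι} {a b : Bool} :
    (friendshipGraph ι).Adj (some (i, a)) (some (j, b)) ↔ i = j ∧ a ≠ b := by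
  simp only [friendshipGraph, fromRel_adj]
  grind

lemma isUniversal_none : (friendshipGraph ι).IsUniversal none := by
  rintro (_ | x) hne
  · exact absurd rfl hne
  · exact adj_none_some x

lemma eq_none_of_adj_of_adj {a b c : Option (ι × Bool)} (hab : (friendshipGraph ι).Adj a b)
    (hbc : (friendshipGraph ι).Adj b c) (hne : a ≠ c) (hac : ¬ (friendshipGraph ι).Adj a c) :
    b = none := by
  match a, b, c with
  | _, none, _ => rfl
  | none, some _, _ => exact absurd (isUniversal_none hne) hac
  | some _, some _, none => exact absurd (isUniversal_none hne.symm).symm hac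
  | some (i, x), some (j, y), some (k, z) =>
    obtain ⟨rfl, hxy⟩ := adj_some_some.1 hab
    obtain ⟨rfl, hyz⟩ := adj_some_some.1 hbc
    have hxz : x = z := (Bool.eq_not_of_ne hxy).trans (Bool.eq_not_of_ne hyz.symm).symm
    exact absurd (by rw [hxz]) hne

lemma isChordal : IsChordal (friendshipGraph ι) :=
  isChordal_of_forall_middle_mem_clique (isClique_singleton none) fun _ _ _ =>
    eq_none_of_adj_of_adj

lemma nonempty_commonNeighbors {u v : Option (ι × Bool)} (huv : (friendshipGraph ι).Adj u v) :
    ((friendshipGraph ι).commonNeighbors u v).Nonempty := by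
  match u, v with
  | none, none => exact absurd rfl huv.ne
  | none, some (i, b) => exact ⟨some (i, !b), adj_none_some _, by simp [adj_some_some]⟩
  | some (i, b), none => exact ⟨some (i, !b), by simp [adj_some_some], adj_none_some _⟩
  | some x, some y => exact ⟨none, (adj_none_some x).symm, (adj_none_some y).symm⟩

lemma not_isBridge (e : Sym2 (Option (ι × Bool))) : ¬ (friendshipGraph ι).IsBridge e :=
  not_isBridge_of_nonempty_commonNeighbors (Connected.of_isUniversal isUniversal_none).preconnected
    (fun _ _ => nonempty_commonNeighbors) e

lemma friendshipColouring_lt_three (e : Sym2 (Option (ι × Bool))) :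
    friendshipColouring ι e < 3 := by
  induction e using Sym2.ind with
  | _ u v =>
    rcases u with _ | ⟨i, _ | _⟩ <;> rcases v with _ | ⟨j, _ | _⟩ <;> simp [friendshipColouring]

lemma rainbowConnectedUnder_friendshipColouring :
    RainbowConnectedUnder (friendshipGraph ι) (friendshipColouring ι) := by
  intro u v
  by_cases huv : u = v
  · subst huv
    exact ⟨.nil, by simp⟩
  by_cases hadj : (friendshipGraph ι).Adj u v
  · exact ⟨.cons hadj .nil, by simp [huv]⟩
  match u, v with
  | none, _ => exact absurd (isUniversal_none huv) hadj
  | _, none => exact absurd (isUniversal_none (Ne.symm huv)).symm hadj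
  | some (i, a), some (j, b) =>
    obtain rfl | hab := eq_or_ne a b
    · have hrim : (friendshipGraph ι).Adj (some (i, a)) (some (i, !a)) := by simp [adj_some_some]
      refine ⟨.cons hrim (.cons (adj_none_some _).symm (.cons (adj_none_some _) .nil)), ?_, ?_⟩
      · simp [Walk.isPath_def, huv]
      · cases a <;> simp [friendshipColouring]
    · refine ⟨.cons (adj_none_some _).symm (.cons (adj_none_some _) .nil), ?_, ?_⟩
      · simp [Walk.isPath_def, huv]
      · cases a <;> cases b <;> simp_all [friendshipColouring]

theorem rc_eq_three (hι : 2 < ENat.card ι) : rc (friendshipGraph ι) = 3 := by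
  have hr := rainbowConnectedUnder_friendshipColouring (ι := ι)
  have hlt : ∀ e ∈ (friendshipGraph ι).edgeSet, friendshipColouring ι e < 3 := fun e _ =>
    friendshipColouring_lt_three e
  obtain ⟨c, hc, hrc⟩ := hr.exists_lt_rc hlt
  let tip (i : ι) : Option (ι × Bool) := some (i, true)
  have htip : Function.Injective tip := fun i j hij => by simpa [tip] using hij
  have hindep : (friendshipGraph ι).IsIndepSet (Set.range tip) := by
    rintro _ ⟨i, rfl⟩ _ ⟨j, rfl⟩ -
    simp [tip, adj_some_some]
  refine le_antisymm (hr.rc_le hlt) (hrc.two_lt_of_isIndepSet hc (z := none) (S := Set.range tip)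
    ?_ hindep ?_ ?_)
  · rintro _ ⟨i, rfl⟩
    exact adj_none_some _
  · intro u hu v hv huv w hw
    exact eq_none_of_adj_of_adj hw.1 hw.2.symm huv (hindep hu hv huv)
  · exact hι.trans_le htip.encard_range

end friendshipGraph

/-- There exists a finite connected bridge-less chordal graph `G` with
`rc(G) = 3 · rad(G)`. -/
theorem stmt_9 : ∃ (V : Type) (_ : Fintype V) (G : SimpleGraph V),
    G.Connected ∧ IsChordal G ∧ (∀ e : Sym2 V, ¬ G.IsBridge e) ∧
    rc G = 3 * graphRadius G := by
  have hcentre : (friendshipGraph (Fin 3)).IsUniversal none := friendshipGraph.isUniversal_none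
  refine ⟨Option (Fin 3 × Bool), inferInstance, friendshipGraph (Fin 3),
    .of_isUniversal hcentre, friendshipGraph.isChordal, friendshipGraph.not_isBridge, ?_⟩
  rw [friendshipGraph.rc_eq_three (by norm_num), graphRadius_eq_one_of_isUniversal hcentre]
end

section
/- Let G be a finite connected simple graph and let D ⊆ V(G) be a connected two-way two-step dominating set of G (that is: every vertex of G is at graph distance at most 2 from D, the induced subgraph G[D] is connected, D contains every pendant vertex of G, and every vertex at distance exactly 2 from D has at least two neighbours at distance exactly 1 from D). Then rc(G) ≤ rc(G[D]) + 6. -/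
open SimpleGraph Set

/-!
Label the vertices of `N¹(D)` by Booleans so that every vertex of `N¹(D)` adjacent to another one is
adjacent to one of the opposite label, and every remaining one with a neighbour in `N²(D)` has there
a neighbour seeing both labels. Then the edges outside `G[D]` can be coloured with six new colours
`leg x`, `arm x`, `bridge`, `spare` in such a way that every vertex reaches `D` by a rainbow walk
in the colours `leg x, bridge, arm x, arm (!x)` for *each* label `x`, and moreover either in the
colours `leg x, spare` for *some* `x`, or in the colours `leg x, arm x` for *each* `x`. Hence any
two vertices reach `D` by walks without a common colour, and a rainbow walk inside `G[D]` joins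
these.
-/

section RainbowWalks

variable {V W α β : Type*} {G : SimpleGraph V} {H : SimpleGraph W} {c : Sym2 V → α}
  {D : Set V} {A B : Set α} {u v w : V}

/-- A walk is rainbow under the edge colouring `c` if its edges have distinct colours. -/
def IsRainbow (c : Sym2 V → α) (p : G.Walk u v) : Prop := (p.edges.map c).Nodup

lemma IsRainbow.comp {p : G.Walk u v} (hp : IsRainbow c p) {f : α → β} (hf : InjOn f A)
    (hA : ∀ e ∈ p.edges, c e ∈ A) : IsRainbow (f ∘ c) p := by
  rw [IsRainbow, ← List.map_map]
  refine List.Nodup.map_on ?_ hp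
  simp only [List.forall_mem_map]
  exact fun e he e' he' h ↦ hf (hA e he) (hA e' he') h

lemma IsRainbow.bypass [DecidableEq V] {p : G.Walk u v} (hp : IsRainbow c p) :
    IsRainbow c p.bypass :=
  List.Nodup.map_on
    (fun _ he _ he' ↦ List.inj_on_of_nodup_map hp (p.edges_bypass_subset_edges he)
      (p.edges_bypass_subset_edges he'))
    p.bypass_isPath.isTrail.edges_nodup

/-- Two vertices are joined by a rainbow walk all of whose colours belong to the palette `A`. -/
def RainbowJoined (G : SimpleGraph V) (c : Sym2 V → α) (A : Set α) (u v : V) : Prop :=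
  ∃ p : G.Walk u v, IsRainbow c p ∧ ∀ e ∈ p.edges, c e ∈ A

namespace RainbowJoined

lemma refl (u : V) : RainbowJoined G c A u u := ⟨.nil, by simp [IsRainbow]⟩

lemma mono (hAB : A ⊆ B) : RainbowJoined G c A u v → RainbowJoined G c B u v
  | ⟨p, hp, hA⟩ => ⟨p, hp, fun e he ↦ hAB (hA e he)⟩

lemma symm : RainbowJoined G c A u v → RainbowJoined G c A v u
  | ⟨p, hp, hA⟩ => ⟨p.reverse, by simpa [IsRainbow] using hp, by simpa using hA⟩

lemma trans (hAB : Disjoint A B) :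
    RainbowJoined G c A u v → RainbowJoined G c B v w → RainbowJoined G c (A ∪ B) u w
  | ⟨p, hp, hA⟩, ⟨q, hq, hB⟩ => by
    refine ⟨p.append q, ?_, ?_⟩
    · rw [IsRainbow, Walk.edges_append, List.map_append]
      refine List.Nodup.append hp hq fun x hxp hxq ↦ ?_
      exact hAB.notMem_of_mem_left (List.forall_mem_map.2 hA x hxp) (List.forall_mem_map.2 hB x hxq)
    · intro e he
      rw [Walk.edges_append, List.mem_append] at he
      exact he.imp (hA e) (hB e)

lemma of_adj (h : G.Adj u v) : RainbowJoined G c {c s(u, v)} u v :=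
  ⟨h.toWalk, by simp [IsRainbow], by simp⟩

lemma cons (h : G.Adj u v) (hc : c s(u, v) ∉ A) (hA : RainbowJoined G c A v w) :
    RainbowJoined G c (insert (c s(u, v)) A) u w :=
  (of_adj h).trans (disjoint_singleton_left.2 hc) hA

lemma map {c : Sym2 W → α} (f : G →g H) :
    RainbowJoined G (c ∘ Sym2.map f) A u v → RainbowJoined H c A (f u) (f v)
  | ⟨p, hp, hA⟩ => ⟨p.map f, by simpa [IsRainbow] using hp, by simpa using hA⟩

end RainbowJoined

/-- The vertex `u` is joined to some vertex of `D` by a rainbow walk with colours in `A`. -/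
def Escapes (G : SimpleGraph V) (D : Set V) (c : Sym2 V → α) (A : Set α) (u : V) : Prop :=
  ∃ d ∈ D, RainbowJoined G c A u d

namespace Escapes

lemma of_mem (hu : u ∈ D) : Escapes G D c A u := ⟨u, hu, .refl u⟩

lemma mono (hAB : A ⊆ B) : Escapes G D c A u → Escapes G D c B u
  | ⟨d, hd, h⟩ => ⟨d, hd, h.mono hAB⟩

lemma cons {x : α} (h : G.Adj u v) (hx : c s(u, v) = x) (hxA : x ∉ A) :
    Escapes G D c A v → Escapes G D c (insert x A) u
  | ⟨d, hd, hA⟩ => ⟨d, hd, by subst hx; exact hA.cons h hxA⟩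

lemma rainbowJoined {P : Set α} (hu : Escapes G D c A u) (hv : Escapes G D c B v)
    (hAB : Disjoint A B) (hP : Disjoint P (A ∪ B))
    (hD : ∀ d ∈ D, ∀ d' ∈ D, RainbowJoined G c P d d') :
    RainbowJoined G c (A ∪ P ∪ B) u v := by
  obtain ⟨d, hd, hud⟩ := hu
  obtain ⟨d', hd', hvd'⟩ := hv
  rw [disjoint_union_right] at hP
  exact (hud.trans hP.1.symm (hD d hd d' hd')).trans (hAB.union_left hP.2) hvd'.symm

end Escapes

lemma exists_rainbowConnectedUnder_lt_rc [Finite V] (hG : G.Connected) :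
    ∃ c : Sym2 V → ℕ, (∀ e ∈ G.edgeSet, c e < rc G) ∧ RainbowConnectedUnder G c := by
  suffices h : {n | ∃ c : Sym2 V → ℕ, (∀ e ∈ G.edgeSet, c e < n) ∧
      RainbowConnectedUnder G c}.Nonempty from Nat.sInf_mem h
  obtain ⟨n, ⟨f⟩⟩ := Finite.exists_equiv_fin (Sym2 V)
  refine ⟨n, fun e ↦ f e, fun e _ ↦ (f e).2, fun u v ↦ ?_⟩
  obtain ⟨p, hp⟩ := hG.exists_isPath u v
  exact ⟨p, hp, hp.isTrail.edges_nodup.map (Fin.val_injective.comp f.injective)⟩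

lemma rc_le_card {s : Finset α} (hs : ∀ e ∈ G.edgeSet, c e ∈ s)
    (h : ∀ u v, RainbowJoined G c univ u v) : rc G ≤ s.card := by
  classical
  have hinj : InjOn s.toList.idxOf s := fun a ha b _ hab ↦
    (List.idxOf_inj (Finset.mem_toList.2 ha)).1 hab
  refine Nat.sInf_le ⟨s.toList.idxOf ∘ c, fun e he ↦ ?_, fun u v ↦ ?_⟩
  · rw [← s.length_toList]
    exact List.idxOf_lt_length_of_mem (Finset.mem_toList.2 (hs e he))
  · obtain ⟨p, hp, -⟩ := h u v
    exact ⟨p.bypass, p.bypass_isPath,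
      hp.bypass.comp hinj fun e he ↦ hs e (p.bypass.edges_subset_edgeSet he)⟩

end RainbowWalks

lemma exists_labelling_extending {V : Type*} [Finite V] (H : SimpleGraph V) (S : Set V)
    (κ₀ : V → Bool) :
    ∃ κ : V → Bool, EqOn κ κ₀ S ∧ ∀ a ∉ S, ∀ b, H.Adj a b → ∃ b', H.Adj a b' ∧ κ b' = !κ a := by
  classical
  -- Take an extension of `κ₀` with a maximal cut: flipping a vertex off `S` all of whose neighbours
  -- have its own label would enlarge the cut.
  let cut (κ : V → Bool) : Set (V × V) := {e | H.Adj e.1 e.2 ∧ κ e.2 = !κ e.1}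
  obtain ⟨κ, hκ, hmax⟩ := (toFinite {κ | EqOn κ κ₀ S}).exists_maximalFor cut _ ⟨κ₀, eqOn_refl _ _⟩
  refine ⟨κ, hκ, fun a ha b hab ↦ ?_⟩
  by_contra! hsame
  replace hsame : ∀ x, H.Adj a x → κ x = κ a := fun x hx ↦ by simpa using hsame x hx
  let κ' := Function.update κ a (!κ a)
  have hκ' : EqOn κ' κ₀ S := fun x hx ↦ by
    rw [← hκ hx]
    exact Function.update_of_ne (ne_of_mem_of_not_mem hx ha) _ _
  have hcut : cut κ ⊆ cut κ' := by
    rintro ⟨x, y⟩ ⟨hxy, hne⟩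
    have hxa : x ≠ a := by rintro rfl; simp [hsame y hxy] at hne
    have hya : y ≠ a := by rintro rfl; simp [hsame x hxy.symm] at hne
    exact ⟨hxy, by simpa [κ', hxa, hya] using hne⟩
  have hab' : (a, b) ∈ cut κ' := ⟨hab, by simp [κ', hab.ne', hsame b hab]⟩
  simpa [hsame b hab] using (hmax hκ' hcut hab').2

section Layers

variable {V : Type*} (G : SimpleGraph V) (D : Set V)

/-- The vertices outside `D` with a neighbour in `D`. This is `N¹(D)`. -/
def firstLayer : Set V := {v | v ∉ D ∧ ∃ d ∈ D, G.Adj v d}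

/-- The vertices outside `D` with no neighbour in `D`. This is `N²(D)` when every vertex is at
distance at most `2` from `D`. -/
def secondLayer : Set V := (D ∪ firstLayer G D)ᶜ

/-- The vertices of `N¹(D)` with a neighbour in `N¹(D)`. -/
def linkedLayer : Set V := {a ∈ firstLayer G D | ∃ b ∈ firstLayer G D, G.Adj a b}

/-- The vertices that have neighbours of both labels in `N¹(D)`. -/
def bichromatic (κ : V → Bool) : Set V := {v | ∀ x, ∃ a ∈ firstLayer G D, G.Adj v a ∧ κ a = x}

/-- The property of a Boolean labelling of `N¹(D)` on which the colouring of `G` relies: a linked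
vertex is adjacent to one of the other label inside `N¹(D)`, and an unlinked vertex with a neighbour
in `N²(D)` has there a neighbour seeing both labels. The labels off `N¹(D)` are irrelevant. -/
structure IsSeparatingLabelling (κ : V → Bool) : Prop where
  exists_adj_not : ∀ a ∈ linkedLayer G D, ∃ b ∈ firstLayer G D, G.Adj a b ∧ κ b = !κ a
  exists_adj_bichromatic : ∀ a ∈ firstLayer G D, a ∉ linkedLayer G D → ∀ v ∈ secondLayer G D,
    G.Adj a v → ∃ w ∈ secondLayer G D, G.Adj a w ∧ w ∈ bichromatic G D κ

/-- `π` sends each vertex of `N¹(D)` to a neighbour in `D` and each vertex of `N²(D)` to a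
neighbour in `N¹(D)`. Its values on `D` are irrelevant. -/
structure IsParentMap (π : V → V) : Prop where
  first : ∀ a ∈ firstLayer G D, π a ∈ D ∧ G.Adj a (π a)
  second : ∀ v ∈ secondLayer G D, π v ∈ firstLayer G D ∧ G.Adj v (π v)

variable {G D}

lemma mem_secondLayer {v : V} (hD : v ∉ D) (h1 : v ∉ firstLayer G D) : v ∈ secondLayer G D :=
  fun h ↦ h.elim hD h1

lemma exists_isParentMap
    (h2 : ∀ v ∈ secondLayer G D, (G.neighborSet v ∩ firstLayer G D).Nonempty) :
    ∃ π, IsParentMap G D π := by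
  have hparent (v : V) : ∃ p, (v ∈ firstLayer G D → p ∈ D ∧ G.Adj v p) ∧
      (v ∈ secondLayer G D → p ∈ firstLayer G D ∧ G.Adj v p) := by
    by_cases hv : v ∈ firstLayer G D
    · obtain ⟨d, hd⟩ := hv.2
      exact ⟨d, fun _ ↦ hd, fun hv' ↦ absurd (.inr hv) hv'⟩
    by_cases hv' : v ∈ secondLayer G D
    · obtain ⟨a, hva, ha⟩ := h2 v hv'
      exact ⟨a, fun h ↦ absurd h hv, fun _ ↦ ⟨ha, hva⟩⟩
    · exact ⟨v, fun h ↦ absurd h hv, fun h ↦ absurd h hv'⟩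
  choose π hπ₁ hπ₂ using hparent
  exact ⟨π, hπ₁, hπ₂⟩

lemma mem_bichromatic {κ : V → Bool} {v a b : V} (ha : a ∈ firstLayer G D)
    (hb : b ∈ firstLayer G D) (hva : G.Adj v a) (hvb : G.Adj v b) (hκ : κ b = !κ a) :
    v ∈ bichromatic G D κ := by
  intro x
  obtain rfl | rfl := Bool.eq_or_eq_not x (κ a)
  exacts [⟨a, ha, hva, rfl⟩, ⟨b, hb, hvb, hκ⟩]

lemma exists_isSeparatingLabelling [Finite V]
    (h2 : ∀ v ∈ secondLayer G D, (G.neighborSet v ∩ firstLayer G D).Nontrivial) :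
    ∃ κ, IsSeparatingLabelling G D κ := by
  -- Label the linked vertices first, then extend along pairs with a common neighbour in `N²(D)`.
  let H : SimpleGraph V :=
    { Adj a b := a ∈ firstLayer G D ∧ b ∈ firstLayer G D ∧ G.Adj a b
      symm := ⟨fun _ _ ⟨ha, hb, hab⟩ ↦ ⟨hb, ha, hab.symm⟩⟩
      loopless := ⟨fun _ h ↦ G.irrefl h.2.2⟩ }
  let K : SimpleGraph V :=
    { Adj a b := a ≠ b ∧ a ∈ firstLayer G D ∧ b ∈ firstLayer G D ∧
        ∃ v ∈ secondLayer G D, G.Adj v a ∧ G.Adj v b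
      symm := ⟨fun _ _ ⟨hne, ha, hb, v, hv, hva, hvb⟩ ↦ ⟨hne.symm, hb, ha, v, hv, hvb, hva⟩⟩
      loopless := ⟨fun _ h ↦ h.1 rfl⟩ }
  obtain ⟨κ₀, -, hκ₀⟩ := exists_labelling_extending H ∅ fun _ ↦ true
  obtain ⟨κ, hκ, hκK⟩ := exists_labelling_extending K (linkedLayer G D) κ₀
  refine ⟨κ, fun a ha ↦ ?_, fun a ha haS v hv hav ↦ ?_⟩
  · obtain ⟨ha₁, b, hb, hab⟩ := ha
    obtain ⟨b', ⟨-, hb', hab'⟩, hne⟩ := hκ₀ a (notMem_empty a) b ⟨ha₁, hb, hab⟩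
    refine ⟨b', hb', hab', ?_⟩
    rwa [hκ ⟨ha₁, b, hb, hab⟩, hκ ⟨hb', a, ha₁, hab'.symm⟩]
  · obtain ⟨x, ⟨hvx, hx⟩, hxa⟩ := (h2 v hv).exists_ne a
    obtain ⟨b, ⟨-, -, hb, w, hw, hwa, hwb⟩, hne⟩ :=
      hκK a haS x ⟨hxa.symm, ha, hx, v, hv, hav.symm, hvx⟩
    exact ⟨w, hw, hwa.symm, mem_bichromatic ha hb hwa hwb hne⟩

end Layers

/-- The colours used on `G`: the colour `n` of an edge inside `D` becomes `inner n`. Edges between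
`D` and `N¹(D)` receive a colour `leg x`, edges inside `N¹(D)` receive `bridge`, and edges between
`N¹(D)` and `N²(D)` receive a colour `arm x`, `bridge` or `spare`. -/
inductive Colour
  | inner (n : ℕ)
  | leg (x : Bool)
  | arm (x : Bool)
  | bridge
  | spare

open Colour

open Classical in
/-- The first `k` inner colours and the six other colours. -/
noncomputable def palette (k : ℕ) : Finset Colour :=
  (Finset.range k).image inner ∪ {leg true, leg false, arm true, arm false, bridge, spare}

lemma card_palette_le (k : ℕ) : (palette k).card ≤ k + 6 := by
  classical
  exact (Finset.card_union_le _ _).trans <|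
    add_le_add (Finset.card_image_le.trans_eq (Finset.card_range k)) Finset.card_le_six

section LayeredColouring

variable {V : Type*} (G : SimpleGraph V) (D : Set V) (κ : V → Bool) (π : V → V) (c₀ : Sym2 V → ℕ)

open Classical in
/-- The colour of an edge from `a ∈ N¹(D)` to `d ∈ D`. -/
noncomputable def legColour (a d : V) : Colour :=
  if d = π a ∨ a ∈ linkedLayer G D then leg (κ a) else leg (!κ a)

open Classical in
/-- The colour of an edge from `v ∈ N²(D)` to `a ∈ N¹(D)`. At a vertex seeing only one label, the
colour of the edge to the parent `π v` is one that the walks to `D` starting at `π v` avoid. -/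
noncomputable def armColour (v a : V) : Colour :=
  if v ∈ bichromatic G D κ then arm (κ a)
  else if a ≠ π v then spare
  else if a ∈ linkedLayer G D then arm (κ a) else bridge

open Classical in
/-- The edge colouring of `G` extending the colouring `c₀` of the edges inside `D`. -/
noncomputable def layeredColouring : Sym2 V → Colour :=
  Sym2.lift ⟨fun u v ↦
    if u ∈ D then if v ∈ D then inner (c₀ s(u, v)) else legColour G D κ π v u
    else if v ∈ D then legColour G D κ π u v
    else if u ∈ firstLayer G D then
      if v ∈ firstLayer G D then bridge else armColour G D κ π v u
    else if v ∈ firstLayer G D then armColour G D κ π u v else spare,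
    fun u v ↦ by simp only [Sym2.eq_swap (a := u)]; split_ifs <;> rfl⟩

variable {G D κ π c₀} {u v a b d : V}

lemma layeredColouring_inner (hu : u ∈ D) (hv : v ∈ D) :
    layeredColouring G D κ π c₀ s(u, v) = inner (c₀ s(u, v)) := by
  simp [layeredColouring, hu, hv]

lemma layeredColouring_leg (ha : a ∈ firstLayer G D) (hd : d ∈ D) :
    layeredColouring G D κ π c₀ s(a, d) = legColour G D κ π a d := by
  simp [layeredColouring, ha.1, hd]

lemma layeredColouring_bridge (ha : a ∈ firstLayer G D) (hb : b ∈ firstLayer G D) :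
    layeredColouring G D κ π c₀ s(a, b) = bridge := by
  simp [layeredColouring, ha, hb, ha.1, hb.1]

lemma layeredColouring_arm (hv : v ∈ secondLayer G D) (ha : a ∈ firstLayer G D) :
    layeredColouring G D κ π c₀ s(v, a) = armColour G D κ π v a := by
  obtain ⟨hvD, hv₁⟩ := not_or.1 hv
  simp [layeredColouring, ha, ha.1, hvD, hv₁]

lemma mem_of_layeredColouring_eq_inner {n : ℕ} :
    layeredColouring G D κ π c₀ s(u, v) = inner n → u ∈ D ∧ v ∈ D := by
  simp only [layeredColouring, legColour, armColour, Sym2.lift_mk]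
  split_ifs <;> simp_all

lemma layeredColouring_mem_palette {k : ℕ}
    (hk : ∀ u ∈ D, ∀ v ∈ D, G.Adj u v → c₀ s(u, v) < k) {e : Sym2 V} (he : e ∈ G.edgeSet) :
    layeredColouring G D κ π c₀ e ∈ palette k := by
  induction e with | _ u v
  cases hc : layeredColouring G D κ π c₀ s(u, v) with
  | inner n =>
    obtain ⟨hu, hv⟩ := mem_of_layeredColouring_eq_inner hc
    obtain rfl : c₀ s(u, v) = n := inner.inj ((layeredColouring_inner hu hv).symm.trans hc)
    simpa [palette] using hk u hu v hv he
  | leg x => cases x <;> simp [palette]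
  | arm x => cases x <;> simp [palette]
  | bridge => simp [palette]
  | spare => simp [palette]

lemma rainbowJoined_range_inner (hD : RainbowConnectedUnder (G.induce D) (c₀ ∘ Sym2.map (↑)))
    (hu : u ∈ D) (hv : v ∈ D) :
    RainbowJoined G (layeredColouring G D κ π c₀) (range inner) u v := by
  have hcomp : layeredColouring G D κ π c₀ ∘ Sym2.map ((↑) : D → V) =
      inner ∘ c₀ ∘ Sym2.map (↑) := by
    ext ⟨x, y⟩
    exact layeredColouring_inner x.2 y.2
  obtain ⟨p, -, hp⟩ := hD ⟨u, hu⟩ ⟨v, hv⟩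
  have hinner : InjOn inner univ := fun m _ n _ ↦ inner.inj
  refine RainbowJoined.map (Embedding.induce D).toHom
    (u := ⟨u, hu⟩) (v := ⟨v, hv⟩) (c := layeredColouring G D κ π c₀) ⟨p, ?_, ?_⟩
  · exact hcomp ▸ IsRainbow.comp hp hinner fun _ _ ↦ mem_univ _
  · exact fun e _ ↦ ⟨_, (congrFun hcomp e).symm⟩

lemma escapes_of_mem_firstLayer (hπ : IsParentMap G D π) (ha : a ∈ firstLayer G D) :
    Escapes G D (layeredColouring G D κ π c₀) {leg (κ a)} a := by
  obtain ⟨hd, had⟩ := hπ.first a ha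
  have hc : layeredColouring G D κ π c₀ s(a, π a) = leg (κ a) := by
    simp [layeredColouring_leg ha hd, legColour]
  simpa using (Escapes.of_mem hd).cons (A := ∅) had hc (notMem_empty _)

lemma escapes_of_mem_linkedLayer (hπ : IsParentMap G D π) (hκ : IsSeparatingLabelling G D κ)
    (ha : a ∈ linkedLayer G D) (x : Bool) :
    Escapes G D (layeredColouring G D κ π c₀) {leg x, bridge} a := by
  obtain rfl | rfl := Bool.eq_or_eq_not x (κ a)
  · exact (escapes_of_mem_firstLayer hπ ha.1).mono (by simp)
  · obtain ⟨b, hb, hab, hκb⟩ := hκ.exists_adj_not a ha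
    rw [← hκb, pair_comm]
    exact (escapes_of_mem_firstLayer hπ hb).cons hab (layeredColouring_bridge ha.1 hb) (by simp)

lemma escapes_of_mem_bichromatic (hπ : IsParentMap G D π) (hv : v ∈ secondLayer G D)
    (hvκ : v ∈ bichromatic G D κ) (x : Bool) :
    Escapes G D (layeredColouring G D κ π c₀) {leg x, arm x} v := by
  obtain ⟨a, ha, hva, rfl⟩ := hvκ x
  rw [pair_comm]
  refine (escapes_of_mem_firstLayer hπ ha).cons hva ?_ (by simp)
  simp [layeredColouring_arm hv ha, armColour, hvκ]

lemma escapes_of_notMem_linkedLayer (hπ : IsParentMap G D π) (hκ : IsSeparatingLabelling G D κ)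
    (h1 : ∀ a ∈ firstLayer G D, (G.neighborSet a).Nontrivial) (ha : a ∈ firstLayer G D)
    (haS : a ∉ linkedLayer G D) (x : Bool) :
    Escapes G D (layeredColouring G D κ π c₀) {leg x, arm x, arm (!x)} a := by
  obtain rfl | hx := Bool.eq_or_eq_not x (κ a)
  · exact (escapes_of_mem_firstLayer hπ ha).mono (by simp)
  obtain ⟨y, hay, hyπ⟩ := (h1 a ha).exists_ne (π a)
  by_cases hyD : y ∈ D
  · have hc : layeredColouring G D κ π c₀ s(a, y) = leg x := by
      simp [layeredColouring_leg ha hyD, legColour, hyπ, haS, hx]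
    exact ((Escapes.of_mem hyD).cons (A := ∅) hay hc (by simp)).mono (by simp)
  · have hy : y ∈ secondLayer G D := mem_secondLayer hyD fun hy ↦ haS ⟨ha, y, hy, hay⟩
    obtain ⟨w, hw, haw, hwκ⟩ := hκ.exists_adj_bichromatic a ha haS y hy hay
    have hc : layeredColouring G D κ π c₀ s(a, w) = arm (!x) := by
      simp [Sym2.eq_swap (a := a), layeredColouring_arm hw ha, armColour, hwκ, hx]
    refine ((escapes_of_mem_bichromatic hπ hw hwκ x).cons haw hc (by simp)).mono ?_
    grind

lemma exists_escapes_leg_spare_of_notMem_bichromatic (hπ : IsParentMap G D π)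
    (h2 : ∀ v ∈ secondLayer G D, (G.neighborSet v ∩ firstLayer G D).Nontrivial)
    (hv : v ∈ secondLayer G D) (hvκ : v ∉ bichromatic G D κ) :
    ∃ x, Escapes G D (layeredColouring G D κ π c₀) {leg x, spare} v := by
  obtain ⟨a, ⟨hva, ha⟩, haπ⟩ := (h2 v hv).exists_ne (π v)
  refine ⟨κ a, ?_⟩
  rw [pair_comm]
  refine (escapes_of_mem_firstLayer hπ ha).cons hva ?_ (by simp)
  simp [layeredColouring_arm hv ha, armColour, hvκ, haπ]

lemma escapes_of_notMem_bichromatic (hπ : IsParentMap G D π) (hκ : IsSeparatingLabelling G D κ)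
    (h1 : ∀ a ∈ firstLayer G D, (G.neighborSet a).Nontrivial) (hv : v ∈ secondLayer G D)
    (hvκ : v ∉ bichromatic G D κ) (x : Bool) :
    Escapes G D (layeredColouring G D κ π c₀) {leg x, bridge, arm x, arm (!x)} v := by
  obtain ⟨ha, hva⟩ := hπ.second v hv
  by_cases haS : π v ∈ linkedLayer G D
  · have hc : layeredColouring G D κ π c₀ s(v, π v) = arm (κ (π v)) := by
      simp [layeredColouring_arm hv ha, armColour, hvκ, haS]
    refine ((escapes_of_mem_linkedLayer hπ hκ haS x).cons hva hc (by simp)).mono ?_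
    have := Bool.eq_or_eq_not (κ (π v)) x
    grind
  · have hc : layeredColouring G D κ π c₀ s(v, π v) = bridge := by
      simp [layeredColouring_arm hv ha, armColour, hvκ, haS]
    refine ((escapes_of_notMem_linkedLayer hπ hκ h1 ha haS x).cons hva hc (by simp)).mono ?_
    grind

lemma escapes_leg_bridge_arm (hπ : IsParentMap G D π) (hκ : IsSeparatingLabelling G D κ)
    (h1 : ∀ a ∈ firstLayer G D, (G.neighborSet a).Nontrivial) (u : V) (x : Bool) :
    Escapes G D (layeredColouring G D κ π c₀) {leg x, bridge, arm x, arm (!x)} u := by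
  by_cases huD : u ∈ D
  · exact .of_mem huD
  by_cases hu : u ∈ firstLayer G D
  · by_cases huS : u ∈ linkedLayer G D
    · exact (escapes_of_mem_linkedLayer hπ hκ huS x).mono (by grind)
    · exact (escapes_of_notMem_linkedLayer hπ hκ h1 hu huS x).mono (by grind)
  have hu₂ := mem_secondLayer huD hu
  by_cases huκ : u ∈ bichromatic G D κ
  · exact (escapes_of_mem_bichromatic hπ hu₂ huκ x).mono (by grind)
  · exact escapes_of_notMem_bichromatic hπ hκ h1 hu₂ huκ x

lemma escapes_leg_spare_or_leg_arm (hπ : IsParentMap G D π)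
    (h2 : ∀ v ∈ secondLayer G D, (G.neighborSet v ∩ firstLayer G D).Nontrivial) (u : V) :
    (∃ x, Escapes G D (layeredColouring G D κ π c₀) {leg x, spare} u) ∨
      ∀ x, Escapes G D (layeredColouring G D κ π c₀) {leg x, arm x} u := by
  by_cases huD : u ∈ D
  · exact .inr fun _ ↦ .of_mem huD
  by_cases hu : u ∈ firstLayer G D
  · exact .inl ⟨κ u, (escapes_of_mem_firstLayer hπ hu).mono (by simp)⟩
  have hu₂ := mem_secondLayer huD hu
  by_cases huκ : u ∈ bichromatic G D κ
  · exact .inr (escapes_of_mem_bichromatic hπ hu₂ huκ)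
  · exact .inl (exists_escapes_leg_spare_of_notMem_bichromatic hπ h2 hu₂ huκ)

lemma exists_escapes_disjoint (hπ : IsParentMap G D π) (hκ : IsSeparatingLabelling G D κ)
    (h1 : ∀ a ∈ firstLayer G D, (G.neighborSet a).Nontrivial)
    (h2 : ∀ v ∈ secondLayer G D, (G.neighborSet v ∩ firstLayer G D).Nontrivial) (u v : V) :
    ∃ A B, Escapes G D (layeredColouring G D κ π c₀) A u ∧
      Escapes G D (layeredColouring G D κ π c₀) B v ∧ Disjoint A B ∧
      Disjoint (range inner) (A ∪ B) := by
  obtain ⟨x, hu⟩ | hu := escapes_leg_spare_or_leg_arm (κ := κ) (c₀ := c₀) hπ h2 u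
  · exact ⟨_, _, hu, escapes_leg_bridge_arm hπ hκ h1 v (!x), by simp, by simp [Set.disjoint_left]⟩
  obtain ⟨x, hv⟩ | hv := escapes_leg_spare_or_leg_arm (κ := κ) (c₀ := c₀) hπ h2 v
  · exact ⟨_, _, escapes_leg_bridge_arm hπ hκ h1 u (!x), hv, by simp, by simp [Set.disjoint_left]⟩
  · exact ⟨_, _, hu true, hv false, by simp, by simp [Set.disjoint_left]⟩

end LayeredColouring

lemma exists_rainbowConnectedUnder_induce {V : Type*} [Finite V] {G : SimpleGraph V} {D : Set V}
    (hD : (G.induce D).Connected) :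
    ∃ c : Sym2 V → ℕ, (∀ u ∈ D, ∀ v ∈ D, G.Adj u v → c s(u, v) < rc (G.induce D)) ∧
      RainbowConnectedUnder (G.induce D) (c ∘ Sym2.map (↑)) := by
  obtain ⟨c, hlt, hc⟩ := exists_rainbowConnectedUnder_lt_rc hD
  have hinj : Function.Injective (Sym2.map ((↑) : D → V)) :=
    Sym2.map.injective Subtype.val_injective
  refine ⟨Function.extend (Sym2.map (↑)) c 0, fun u hu v hv huv ↦ ?_, ?_⟩
  · have he : s(u, v) = Sym2.map (↑) s((⟨u, hu⟩ : D), ⟨v, hv⟩) := rfl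
    rw [he, hinj.extend_apply]
    exact hlt _ huv
  · rwa [Function.extend_comp hinj]

theorem rc_le_rc_induce_add_six {V : Type*} [Finite V] {G : SimpleGraph V} {D : Set V}
    (hD : (G.induce D).Connected) (h1 : ∀ a ∈ firstLayer G D, (G.neighborSet a).Nontrivial)
    (h2 : ∀ v ∈ secondLayer G D, (G.neighborSet v ∩ firstLayer G D).Nontrivial) :
    rc G ≤ rc (G.induce D) + 6 := by
  obtain ⟨c₀, hlt, hc₀⟩ := exists_rainbowConnectedUnder_induce hD
  obtain ⟨π, hπ⟩ := exists_isParentMap fun v hv ↦ (h2 v hv).nonempty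
  obtain ⟨κ, hκ⟩ := exists_isSeparatingLabelling h2
  refine (rc_le_card (fun e ↦ layeredColouring_mem_palette (κ := κ) (π := π) hlt)
    fun u v ↦ ?_).trans (card_palette_le _)
  obtain ⟨A, B, hu, hv, hAB, hinner⟩ := exists_escapes_disjoint hπ hκ h1 h2 u v
  exact (hu.rainbowJoined hv hAB hinner fun d hd d' hd' ↦
    rainbowJoined_range_inner hc₀ hd hd').mono (subset_univ _)

section DistSet

variable {V : Type*} {G : SimpleGraph V} {D : Set V} {u v : V}

lemma distSet_le (hu : u ∈ D) : distSet G D v ≤ G.dist u v := Nat.sInf_le ⟨u, hu, rfl⟩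

lemma exists_dist_eq_distSet (hD : D.Nonempty) (v : V) : ∃ u ∈ D, G.dist u v = distSet G D v :=
  Nat.sInf_mem (hD.image _)

lemma mem_firstLayer_of_distSet_eq_one (hv : distSet G D v = 1) : v ∈ firstLayer G D := by
  have hD : D.Nonempty := (Nat.nonempty_of_sInf_eq_succ hv).of_image
  refine ⟨fun hvD ↦ ?_, ?_⟩
  · simpa [hv] using distSet_le (G := G) (v := v) hvD
  · obtain ⟨u, hu, huv⟩ := exists_dist_eq_distSet (G := G) hD v
    exact ⟨u, hu, (dist_eq_one_iff_adj.1 (huv.trans hv)).symm⟩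

lemma one_lt_distSet_of_mem_secondLayer (hG : G.Connected) (hD : D.Nonempty)
    (hv : v ∈ secondLayer G D) : 1 < distSet G D v := by
  have h1 : distSet G D v ≠ 1 := fun h ↦ hv (.inr (mem_firstLayer_of_distSet_eq_one h))
  have h0 : distSet G D v ≠ 0 := fun h ↦ by
    obtain ⟨u, hu, huv⟩ := exists_dist_eq_distSet (G := G) hD v
    exact hv (.inl (hG.dist_eq_zero_iff.1 (huv.trans h) ▸ hu))
  omega

end DistSet

/-- If `D` is a connected two-way two-step dominating set in a finite
connected graph `G`, then `rc(G) ≤ rc(G[D]) + 6`. -/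
theorem stmt_11 {V : Type*} [Fintype V] (G : SimpleGraph V) (hG : G.Connected)
    (D : Set V)
    (hdom : ∀ v : V, ∃ u ∈ D, G.dist u v ≤ 2)
    (hconn : (G.induce D).Connected)
    (hpen : ∀ v : V, deg G v = 1 → v ∈ D)
    (htwo : ∀ v : V, distSet G D v = 2 →
      2 ≤ (G.neighborSet v ∩ {w : V | distSet G D w = 1}).ncard) :
    rc G ≤ rc (G.induce D) + 6 := by
  have hD : D.Nonempty := Set.nonempty_coe_sort.1 hconn.nonempty
  refine rc_le_rc_induce_add_six hconn (fun a ⟨haD, d, _, had⟩ ↦ ?_) fun v hv ↦ ?_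
  · by_contra h
    have hsub := Set.not_nontrivial_iff.1 h
    exact haD (hpen a (ncard_eq_one.2 ⟨d, hsub.eq_singleton_of_mem had⟩))
  · obtain ⟨u, hu, huv⟩ := hdom v
    have hv₂ : distSet G D v = 2 :=
      ((distSet_le hu).trans huv).antisymm (one_lt_distSet_of_mem_secondLayer hG hD hv)
    refine (one_lt_ncard_iff_nontrivial.1 (htwo v hv₂)).mono (inter_subset_inter_right _ ?_)
    exact fun w hw ↦ mem_firstLayer_of_distSet_eq_one hw
end

section
/- For every finite connected simple graph G of order n and minimum degree δ, the radius satisfies rad(G) ≤ 3n/(2(δ + 1)) + 1. -/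
open SimpleGraph Set

/-!
Choose a set `C` of vertices with pairwise disjoint closed neighbourhoods greedily, always taking
the new vertex at distance exactly 3 from the connected set `D` built so far and adding a shortest
connecting path to `D`. When this stops, every vertex is within distance 2 of `D`,
`|D| ≤ 3|C| - 2`, and disjointness of the closed neighbourhoods gives `|C| (δ + 1) ≤ n`.

A connected graph on `m` vertices has radius at most `m / 2`: in a spanning tree take a central
vertex `c` and its neighbour `c'` towards a farthest vertex. As `c'` has no smaller eccentricity
than `c`, both sides of the edge `cc'` contain a path on `rad` vertices. Applied to `D`, this gives
`rad G ≤ |D| / 2 + 2 ≤ 3|C| / 2 + 1`.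
-/

section Eccentricity

variable {V : Type*} {G : SimpleGraph V}

theorem dist_le_ecc [Finite V] (u v : V) : G.dist u v ≤ ecc G u :=
  le_csSup (Set.finite_range _).bddAbove (Set.mem_range_self v)

theorem ecc_le {u : V} {r : ℕ} (h : ∀ v, G.dist u v ≤ r) : ecc G u ≤ r :=
  have : Nonempty V := ⟨u⟩
  csSup_le (Set.range_nonempty _) (Set.forall_mem_range.mpr h)

theorem exists_dist_eq_ecc [Finite V] (u : V) : ∃ v, G.dist u v = ecc G u :=
  have : Nonempty V := ⟨u⟩
  Nat.sSup_mem (Set.range_nonempty _) (Set.finite_range _).bddAbove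

theorem graphRadius_le_ecc (u : V) : graphRadius G ≤ ecc G u :=
  Nat.sInf_le (Set.mem_range_self u)

theorem exists_ecc_eq_graphRadius [Nonempty V] : ∃ u, ecc G u = graphRadius G :=
  Nat.sInf_mem (Set.range_nonempty _)

theorem graphRadius_anti [Finite V] {H : SimpleGraph V} (hle : H ≤ G) (hH : H.Connected) :
    graphRadius G ≤ graphRadius H := by
  have := hH.nonempty
  obtain ⟨c, hc⟩ := exists_ecc_eq_graphRadius (G := H)
  calc graphRadius G ≤ ecc G c := graphRadius_le_ecc c
    _ ≤ ecc H c := ecc_le fun v => ((hH c v).dist_anti hle).trans (dist_le_ecc c v)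
    _ = graphRadius H := hc

theorem graphRadius_le_graphRadius_induce_add (hG : G.Connected) {D : Set V} [Finite D]
    (hD : (G.induce D).Connected) {k : ℕ} (hk : ∀ v, ∃ d ∈ D, G.dist d v ≤ k) :
    graphRadius G ≤ graphRadius (G.induce D) + k := by
  have := hD.nonempty
  obtain ⟨c, hc⟩ := exists_ecc_eq_graphRadius (G := G.induce D)
  refine (graphRadius_le_ecc c.1).trans (ecc_le fun v => ?_)
  obtain ⟨d, hd, hdv⟩ := hk v
  obtain ⟨p, hp⟩ := hD.exists_walk_length_eq_dist c ⟨d, hd⟩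
  calc G.dist c v ≤ G.dist c d + G.dist d v := hG.dist_triangle
    _ ≤ (p.map (Embedding.induce D).toHom).length + k := add_le_add (dist_le _) hdv
    _ = (G.induce D).dist c ⟨d, hd⟩ + k := by rw [Walk.length_map, hp]
    _ ≤ graphRadius (G.induce D) + k := by grw [dist_le_ecc, hc]

end Eccentricity

section HalfOrder

variable {V : Type*} {G : SimpleGraph V}

theorem dist_add_dist_le_length_of_mem_support {u v w : V} {p : G.Walk u w} (hv : v ∈ p.support) :
    G.dist u v + G.dist v w ≤ p.length := by
  obtain ⟨q, r, rfl⟩ := Walk.mem_support_iff_exists_append.mp hv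
  rw [Walk.length_append]
  exact add_le_add (dist_le q) (dist_le r)

theorem exists_adj_dist_lt {u v : V} (hr : G.Reachable u v) (huv : u ≠ v) :
    ∃ w, G.Adj u w ∧ G.dist w v < G.dist u v := by
  obtain ⟨p, hp⟩ := hr.exists_walk_length_eq_dist
  cases p with
  | nil => exact absurd rfl huv
  | cons hadj q => exact ⟨_, hadj, (dist_le q).trans_lt (hp ▸ Nat.lt_succ_self q.length)⟩

theorem dist_le_ncard_setOf_dist_lt [Finite V] {a b w : V} (hab : G.Adj a b)
    (hw : G.dist b w < G.dist a w) : G.dist a w ≤ {v | G.dist b v < G.dist a v}.ncard := by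
  classical
  have haw : G.Reachable a w := .of_dist_ne_zero hw.ne_bot
  obtain ⟨p, hp, hlen⟩ := (hab.symm.reachable.trans haw).exists_path_of_dist
  have hsub : (p.support.toFinset : Set V) ⊆ {v | G.dist b v < G.dist a v} := by
    intro v hv
    have hvp : v ∈ p.support := List.mem_toFinset.mp hv
    have hbvw := dist_add_dist_le_length_of_mem_support hvp
    have havw := (p.dropUntil v hvp).reachable.dist_triangle_right a
    rw [Set.mem_ofPred_eq]
    omega
  calc G.dist a w ≤ (Walk.cons hab p).length := dist_le _
    _ = p.support.toFinset.card := by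
      rw [List.toFinset_card_of_nodup hp.support_nodup, Walk.length_support, Walk.length_cons]
    _ ≤ {v | G.dist b v < G.dist a v}.ncard := by
      rw [← Set.ncard_coe_finset]
      exact Set.ncard_le_ncard hsub

theorem two_mul_graphRadius_le_card_of_isTree [Finite V] (hG : G.IsTree) :
    2 * graphRadius G ≤ Nat.card V := by
  have hconn := hG.connected
  have := hconn.nonempty
  obtain ⟨c, hc⟩ := exists_ecc_eq_graphRadius (G := G)
  obtain ⟨w, hw⟩ := exists_dist_eq_ecc (G := G) c
  obtain rfl | hcw := eq_or_ne c w
  · rw [dist_self] at hw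
    omega
  obtain ⟨c', hadj, hlt⟩ := exists_adj_dist_lt (hconn c w) hcw
  obtain ⟨w', hw'⟩ := exists_dist_eq_ecc (G := G) c'
  have hr : graphRadius G ≤ G.dist c' w' := hw' ▸ graphRadius_le_ecc c'
  have hlt' : G.dist c w' < G.dist c' w' := by
    refine lt_of_le_of_ne (((dist_le_ecc c w').trans_eq hc).trans hr) ?_
    simpa only [dist_comm] using hG.dist_ne_of_adj w' hadj
  have hdisj : Disjoint {v | G.dist c' v < G.dist c v} {v | G.dist c v < G.dist c' v} :=
    Set.disjoint_left.mpr fun v (h : G.dist c' v < G.dist c v) h' => h.asymm h'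
  calc 2 * graphRadius G ≤ G.dist c w + G.dist c' w' := by omega
    _ ≤ {v | G.dist c' v < G.dist c v}.ncard + {v | G.dist c v < G.dist c' v}.ncard :=
      add_le_add (dist_le_ncard_setOf_dist_lt hadj hlt)
        (dist_le_ncard_setOf_dist_lt hadj.symm hlt')
    _ = ({v | G.dist c' v < G.dist c v} ∪ {v | G.dist c v < G.dist c' v}).ncard :=
      (Set.ncard_union_eq hdisj).symm
    _ ≤ Nat.card V := Set.ncard_le_card _

theorem two_mul_graphRadius_le_card [Finite V] (hG : G.Connected) :
    2 * graphRadius G ≤ Nat.card V := by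
  obtain ⟨T, hTG, hT⟩ := hG.exists_isTree_le
  grw [graphRadius_anti hTG hT.connected, two_mul_graphRadius_le_card_of_isTree hT]

end HalfOrder

section Packing

variable {V : Type*} {G : SimpleGraph V}

theorem disjoint_insert_neighborSet_of_two_lt_dist {a b : V} (hab : 2 < G.dist a b) :
    Disjoint (insert a (G.neighborSet a)) (insert b (G.neighborSet b)) := by
  refine Set.disjoint_left.mpr ?_
  have hlen (p : G.Walk a b) : 2 < p.length := hab.trans_le (dist_le p)
  rintro z (rfl | (haz : G.Adj a z)) (rfl | (hbz : G.Adj b z))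
  · simpa only [Walk.length_nil, not_lt_zero] using hlen .nil
  · simpa using hlen hbz.symm.toWalk
  · simpa using hlen haz.toWalk
  · simpa using hlen (.cons haz hbz.symm.toWalk)

theorem ncard_insert_neighborSet [Finite V] (v : V) :
    (insert v (G.neighborSet v)).ncard = deg G v + 1 :=
  Set.ncard_insert_of_notMem (G.notMem_neighborSet_self)

theorem card_mul_succ_le_card [Fintype V] {δ : ℕ} {C : Finset V} (hδ : ∀ v ∈ C, δ ≤ deg G v)
    (hC : (C : Set V).Pairwise fun a b => 2 < G.dist a b) :
    C.card * (δ + 1) ≤ Fintype.card V := by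
  classical
  have hdisj : (C : Set V).PairwiseDisjoint fun v => (insert v (G.neighborSet v)).toFinset :=
    fun a ha b hb hab => Set.disjoint_toFinset.mpr
      (disjoint_insert_neighborSet_of_two_lt_dist (hC ha hb hab))
  calc C.card * (δ + 1) ≤ ∑ v ∈ C, (insert v (G.neighborSet v)).toFinset.card := by
        rw [← smul_eq_mul]
        refine Finset.card_nsmul_le_sum _ _ _ fun v hv => ?_
        rw [← Set.ncard_eq_toFinset_card', ncard_insert_neighborSet]
        exact Nat.succ_le_succ (hδ v hv)
    _ = (C.biUnion fun v => (insert v (G.neighborSet v)).toFinset).card :=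
      (Finset.card_biUnion hdisj).symm
    _ ≤ Fintype.card V := Finset.card_le_univ _

theorem exists_walk_length_eq_forall_lt_dist (hG : G.Connected) {D : Finset V} (hD : D.Nonempty)
    {k : ℕ} {v : V} (hv : ∀ d ∈ D, k < G.dist d v) :
    ∃ d ∈ D, ∃ w, ∃ p : G.Walk d w, p.length = k + 1 ∧ ∀ e ∈ D, k < G.dist e w := by
  obtain ⟨d, hd, hmin⟩ := D.exists_min_image (G.dist · v) hD
  obtain ⟨p, hp⟩ := hG.exists_walk_length_eq_dist d v
  have hdv := hv d hd
  refine ⟨d, hd, p.getVert (k + 1), p.take (k + 1), ?_, fun e he => ?_⟩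
  · rw [p.take_length]
    omega
  · have hwv : G.dist (p.getVert (k + 1)) v ≤ p.length - (k + 1) :=
      (dist_le (p.drop (k + 1))).trans_eq (p.drop_length _)
    have htri : G.dist e v ≤ G.dist e (p.getVert (k + 1)) + G.dist (p.getVert (k + 1)) v :=
      hG.dist_triangle
    have hev := hmin e he
    omega

/-- `C` is a packing of vertices at pairwise distance more than `k`, and `D` is a connected
superset of `C` in which every vertex of `C` but the first accounts for at most `k + 1` vertices.
These are the states of the greedy construction; `card_le` is `|D| ≤ (k + 1) (|C| - 1) + 1` without
the subtraction. -/
structure IsConnectedPacking (G : SimpleGraph V) (k : ℕ) (C D : Finset V) : Prop where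
  subset : C ⊆ D
  connected : (G.induce (D : Set V)).Connected
  card_le : D.card + k ≤ (k + 1) * C.card
  pairwise : (C : Set V).Pairwise fun a b => k < G.dist a b

namespace IsConnectedPacking

theorem singleton (G : SimpleGraph V) (k : ℕ) (v : V) : IsConnectedPacking G k {v} {v} where
  subset := subset_rfl
  connected := by
    rw [Finset.coe_singleton]
    exact ⟨.of_subsingleton⟩
  card_le := by simp [add_comm]
  pairwise := by simp

theorem insert_union_support [DecidableEq V] {k : ℕ} {C D : Finset V}
    (h : IsConnectedPacking G k C D) {d w : V} (hd : d ∈ D) (p : G.Walk d w)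
    (hp : p.length ≤ k + 1) (hw : ∀ e ∈ D, k < G.dist e w) :
    IsConnectedPacking G k (insert w C) (D ∪ p.support.toFinset) where
  subset := Finset.insert_subset
    (Finset.mem_union_right _ (List.mem_toFinset.mpr p.end_mem_support))
    (h.subset.trans Finset.subset_union_left)
  connected := by
    rw [Finset.coe_union, List.coe_toFinset]
    exact induce_union_connected h.connected.preconnected p.connected_induce_support.preconnected
      ⟨d, hd, p.start_mem_support⟩
  card_le := by
    have hwC : w ∉ C := fun hwC => by simpa using hw w (h.subset hwC)
    have hcard : (D ∪ p.support.toFinset).card + 1 ≤ D.card + (k + 2) :=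
      calc (D ∪ p.support.toFinset).card + 1
          ≤ (D ∪ p.support.toFinset).card + (D ∩ p.support.toFinset).card := by
            gcongr
            exact Finset.card_pos.mpr
              ⟨d, Finset.mem_inter.mpr ⟨hd, List.mem_toFinset.mpr p.start_mem_support⟩⟩
        _ = D.card + p.support.toFinset.card := Finset.card_union_add_card_inter _ _
        _ ≤ D.card + (k + 2) := by grw [List.toFinset_card_le, Walk.length_support, hp]
    rw [Finset.card_insert_of_notMem hwC]
    linarith [h.card_le]
  pairwise := by
    rw [Finset.coe_insert]
    exact h.pairwise.insert fun b hb _ =>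
      ⟨dist_comm (G := G) ▸ hw b (h.subset hb), hw b (h.subset hb)⟩

theorem exists_card_lt {k : ℕ} {C D : Finset V} (h : IsConnectedPacking G k C D)
    (hG : G.Connected) {v : V} (hv : ∀ d ∈ D, k < G.dist d v) :
    ∃ C' D', IsConnectedPacking G k C' D' ∧ C.card < C'.card := by
  classical
  have hD : D.Nonempty := Finset.coe_nonempty.mp (Set.nonempty_coe_sort.mp h.connected.nonempty)
  obtain ⟨d, hd, w, p, hp, hw⟩ := exists_walk_length_eq_forall_lt_dist hG hD hv
  have hwC : w ∉ C := fun hwC => by simpa using hw w (h.subset hwC)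
  exact ⟨_, _, h.insert_union_support hd p hp.le hw,
    Finset.card_lt_card (Finset.ssubset_insert hwC)⟩

theorem exists_forall_dist_le [Finite V] (hG : G.Connected) (k : ℕ) :
    ∃ C D, IsConnectedPacking G k C D ∧ ∀ v, ∃ d ∈ D, G.dist d v ≤ k := by
  obtain ⟨v₀⟩ := hG.nonempty
  obtain ⟨C, ⟨D, hCD⟩, hmax⟩ := Set.Finite.exists_maximalFor Finset.card
    {C | ∃ D, IsConnectedPacking G k C D} (Set.toFinite _) ⟨{v₀}, {v₀}, singleton G k v₀⟩
  refine ⟨C, D, hCD, ?_⟩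
  by_contra! hfar
  obtain ⟨v, hv⟩ := hfar
  obtain ⟨C', D', hCD', hlt⟩ := hCD.exists_card_lt hG hv
  exact hlt.not_ge (hmax ⟨D', hCD'⟩ hlt.le)

end IsConnectedPacking

end Packing

/-- For every finite connected graph of order `n` and minimum degree
`δ`, `rad(G) ≤ 3n/(2(δ + 1)) + 1`. -/
theorem stmt_14 {V : Type*} [Fintype V] (G : SimpleGraph V) (hG : G.Connected)
    (δ : ℕ) (hδ : ∀ v : V, δ ≤ deg G v) :
    (graphRadius G : ℝ) ≤ 3 * (Fintype.card V : ℝ) / (2 * (δ + 1)) + 1 := by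
  obtain ⟨C, D, hCD, hdom⟩ := IsConnectedPacking.exists_forall_dist_le hG 2
  have hradD : 2 * graphRadius (G.induce (D : Set V)) ≤ D.card := by
    simpa using two_mul_graphRadius_le_card hCD.connected
  have hradG : graphRadius G ≤ graphRadius (G.induce (D : Set V)) + 2 :=
    graphRadius_le_graphRadius_induce_add hG hCD.connected hdom
  have hrad : (2 * graphRadius G : ℝ) ≤ 3 * C.card + 2 := by
    have := hCD.card_le
    exact_mod_cast (by omega : 2 * graphRadius G ≤ 3 * C.card + 2)
  have hpack : (C.card : ℝ) * (δ + 1) ≤ Fintype.card V := by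
    exact_mod_cast card_mul_succ_le_card (fun v _ => hδ v) hCD.pairwise
  have hC : (C.card : ℝ) ≤ Fintype.card V / (δ + 1) := (le_div_iff₀ (by positivity)).mpr hpack
  calc (graphRadius G : ℝ) ≤ 3 / 2 * C.card + 1 := by linarith
    _ ≤ 3 / 2 * (Fintype.card V / (δ + 1)) + 1 := by gcongr
    _ = 3 * (Fintype.card V : ℝ) / (2 * (δ + 1)) + 1 := by rw [div_mul_div_comm]
end
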